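/- arXiv:1407.7012 — 5 statements merged into one kernel-verified Lean document; each statement's English description precedes it below -/
import Mathlib

section
/- For every n ≥ 1: the degree of δ_n is 2^n; the degree of the lowest-degree nonzero term of δ_n is (2^n + 2)/3 if n is even and (2^n + 4)/3 if n is odd; the degree of ε_n is 2^n − n; and the degree of the lowest-degree nonzero term of ε_n is (2^n + 2)/3 if n is even and (2^n + 1)/3 if n is odd. -/
/-!
Over a linearly ordered semiring squares cannot cancel, so passing to degrees turns the recursion
`δ_{n+1} = δ_n² + ε_n²`, `X ε_{n+1} = δ_n ε_n` into the max-plus recursion `d' = 2 max(d, e)`,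
`e' + 1 = d + e`, and passing to trailing degrees turns it into the same recursion with `min` in
place of `max`. Both start from `(d, e) = (2, 1)`. In the first, `d` always exceeds `e`; in the
second, `d - e` alternates between `1` and `0`, which is the source of the dependence on parity.
-/

section TropicalRecursions

variable {d e : ℕ → ℕ}

theorem eq_two_pow_of_max_plus_recursion (hd₁ : d 1 = 2) (he₁ : e 1 = 1)
    (hd : ∀ n ≥ 1, d (n + 1) = 2 * max (d n) (e n))
    (he : ∀ n ≥ 1, e (n + 1) + 1 = d n + e n) {n : ℕ} (hn : 1 ≤ n) :
    d n = 2 ^ n ∧ e n + n = 2 ^ n := by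
  induction n, hn using Nat.le_induction with
  | base => simp [hd₁, he₁]
  | succ n hn ih =>
    have d_succ := hd n hn
    have e_succ := he n hn
    rw [pow_succ]
    omega

theorem three_mul_eq_of_min_plus_recursion (hd₁ : d 1 = 2) (he₁ : e 1 = 1)
    (hd : ∀ n ≥ 1, d (n + 1) = 2 * min (d n) (e n))
    (he : ∀ n ≥ 1, e (n + 1) + 1 = d n + e n) {n : ℕ} (hn : 1 ≤ n) :
    3 * d n = (if Even n then 2 ^ n + 2 else 2 ^ n + 4) ∧
      3 * e n = (if Even n then 2 ^ n + 2 else 2 ^ n + 1) := by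
  induction n, hn using Nat.le_induction with
  | base => simp [hd₁, he₁]
  | succ n hn ih =>
    have d_succ := hd n hn
    have e_succ := he n hn
    rw [pow_succ]
    by_cases even_n : Even n <;>
      simp only [Nat.even_add_one, even_n, not_true_eq_false, not_false_eq_true, if_true,
        if_false] at ih ⊢ <;>
      omega

end TropicalRecursions

open Polynomial

section NoZeroDivisors

variable {R : Type*} [Semiring R] [NoZeroDivisors R] {p q r : R[X]}

theorem ne_zero_of_X_mul_eq_mul (h : X * r = p * q) (hp : p ≠ 0) (hq : q ≠ 0) : r ≠ 0 :=
  right_ne_zero_of_mul (h ▸ mul_ne_zero hp hq)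

variable [Nontrivial R]

theorem natDegree_add_one_of_X_mul_eq_mul (h : X * r = p * q) (hp : p ≠ 0) (hq : q ≠ 0) :
    r.natDegree + 1 = p.natDegree + q.natDegree := by
  rw [← natDegree_X_mul (ne_zero_of_X_mul_eq_mul h hp hq), h, natDegree_mul hp hq]

theorem natTrailingDegree_add_one_of_X_mul_eq_mul (h : X * r = p * q) (hp : p ≠ 0) (hq : q ≠ 0) :
    r.natTrailingDegree + 1 = p.natTrailingDegree + q.natTrailingDegree := by
  rw [← natTrailingDegree_mul hp hq, ← h,
    natTrailingDegree_mul X_ne_zero (ne_zero_of_X_mul_eq_mul h hp hq), natTrailingDegree_X,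
    add_comm]

end NoZeroDivisors

theorem X_pow_dvd_of_le_natTrailingDegree {R : Type*} [Semiring R] {p : R[X]} {m : ℕ}
    (hm : m ≤ p.natTrailingDegree) : X ^ m ∣ p :=
  X_pow_dvd_iff.2 fun _ hk ↦ coeff_eq_zero_of_lt_natTrailingDegree (hk.trans_le hm)

section OrderedSemiring

variable {R : Type*} [CommSemiring R] [LinearOrder R] [IsStrictOrderedRing R] [ExistsAddOfLE R]

section SumOfTwoSquares

variable {p q : R[X]}

theorem coeff_sq_add_sq_ne_zero_of_natDegree_le (hp : p ≠ 0) (h : q.natDegree ≤ p.natDegree) :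
    (p ^ 2 + q ^ 2).coeff (2 * p.natDegree) ≠ 0 := by
  rw [coeff_add, coeff_pow_of_natDegree_le le_rfl, coeff_pow_of_natDegree_le h]
  have leading_sq_pos : 0 < p.coeff p.natDegree ^ 2 :=
    sq_pos_of_ne_zero (leadingCoeff_ne_zero.2 hp)
  exact (add_pos_of_pos_of_nonneg leading_sq_pos (sq_nonneg _)).ne'

theorem sq_add_sq_ne_zero_of_left_ne_zero (hp : p ≠ 0) : p ^ 2 + q ^ 2 ≠ 0 := by
  intro hpq
  rcases le_or_gt q.natDegree p.natDegree with hle | hlt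
  · exact coeff_sq_add_sq_ne_zero_of_natDegree_le hp hle (by rw [hpq, coeff_zero])
  · exact coeff_sq_add_sq_ne_zero_of_natDegree_le (ne_zero_of_natDegree_gt hlt) hlt.le
      (by rw [add_comm, hpq, coeff_zero])

theorem natDegree_sq_add_sq (p q : R[X]) :
    (p ^ 2 + q ^ 2).natDegree = 2 * max p.natDegree q.natDegree := by
  wlog hle : q.natDegree ≤ p.natDegree generalizing p q
  · rw [add_comm, max_comm, this q p (le_of_not_ge hle)]
  rcases eq_or_ne p 0 with rfl | hp
  · simp
  rw [max_eq_left hle]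
  refine natDegree_eq_of_le_of_coeff_ne_zero ?_ (coeff_sq_add_sq_ne_zero_of_natDegree_le hp hle)
  exact natDegree_add_le_of_degree_le (natDegree_pow_le_of_le 2 le_rfl)
    (natDegree_pow_le_of_le 2 hle)

theorem natTrailingDegree_sq_add_sq (hp : p ≠ 0) (hq : q ≠ 0) :
    (p ^ 2 + q ^ 2).natTrailingDegree = 2 * min p.natTrailingDegree q.natTrailingDegree := by
  wlog hle : p.natTrailingDegree ≤ q.natTrailingDegree generalizing p q
  · rw [add_comm, min_comm, this hq hp (le_of_not_ge hle)]
  rw [min_eq_left hle]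
  set m := p.natTrailingDegree with hm
  obtain ⟨u, hu⟩ := X_pow_dvd_of_le_natTrailingDegree hm.le
  obtain ⟨v, hv⟩ := X_pow_dvd_of_le_natTrailingDegree hle
  have u_coeff_zero : u.coeff 0 ≠ 0 := by
    have : p.coeff m ≠ 0 := coeff_natTrailingDegree_ne_zero.2 hp
    rwa [hu, coeff_X_pow_mul', if_pos le_rfl, Nat.sub_self] at this
  have cofactor_coeff_zero : (u ^ 2 + v ^ 2).coeff 0 ≠ 0 := by
    rw [coeff_add, sq, sq, mul_coeff_zero, mul_coeff_zero]
    exact (add_pos_of_pos_of_nonneg (mul_self_pos.2 u_coeff_zero) (mul_self_nonneg _)).ne'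
  have cofactor_ne_zero : u ^ 2 + v ^ 2 ≠ 0 :=
    fun h ↦ cofactor_coeff_zero (by rw [h, coeff_zero])
  have factorization : p ^ 2 + q ^ 2 = (u ^ 2 + v ^ 2) * X ^ (2 * m) := by
    rw [hu, hv]
    ring
  rw [factorization, natTrailingDegree_mul_X_pow cofactor_ne_zero,
    natTrailingDegree_eq_zero.2 (.inr cofactor_coeff_zero), zero_add]

end SumOfTwoSquares

variable {δ ε : ℕ → R[X]}

theorem ne_zero_of_sq_add_sq_recursion (hδ₁ : δ 1 ≠ 0) (hε₁ : ε 1 ≠ 0)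
    (hδ : ∀ n ≥ 1, δ (n + 1) = δ n ^ 2 + ε n ^ 2)
    (hε : ∀ n ≥ 1, X * ε (n + 1) = δ n * ε n) {n : ℕ} (hn : 1 ≤ n) :
    δ n ≠ 0 ∧ ε n ≠ 0 := by
  induction n, hn using Nat.le_induction with
  | base => exact ⟨hδ₁, hε₁⟩
  | succ n hn ih =>
    obtain ⟨hδn, hεn⟩ := ih
    exact ⟨hδ n hn ▸ sq_add_sq_ne_zero_of_left_ne_zero hδn,
      ne_zero_of_X_mul_eq_mul (hε n hn) hδn hεn⟩

theorem natDegree_of_sq_add_sq_recursion (hδ₁ : δ 1 = C 2 * X ^ 2) (hε₁ : ε 1 = X)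
    (hδ : ∀ n ≥ 1, δ (n + 1) = δ n ^ 2 + ε n ^ 2)
    (hε : ∀ n ≥ 1, X * ε (n + 1) = δ n * ε n) {n : ℕ} (hn : 1 ≤ n) :
    (δ n).natDegree = 2 ^ n ∧ (ε n).natDegree + n = 2 ^ n := by
  have ne_zero {m : ℕ} (hm : 1 ≤ m) : δ m ≠ 0 ∧ ε m ≠ 0 :=
    ne_zero_of_sq_add_sq_recursion (by simp [hδ₁]) (by simp [hε₁]) hδ hε hm
  refine eq_two_pow_of_max_plus_recursion (d := fun m ↦ (δ m).natDegree)
    (e := fun m ↦ (ε m).natDegree) ?_ ?_ (fun m hm ↦ ?_) (fun m hm ↦ ?_) hn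
  · rw [hδ₁, natDegree_C_mul_X_pow 2 2 two_ne_zero]
  · rw [hε₁, natDegree_X]
  · rw [hδ m hm, natDegree_sq_add_sq]
  · exact natDegree_add_one_of_X_mul_eq_mul (hε m hm) (ne_zero hm).1 (ne_zero hm).2

theorem three_mul_natTrailingDegree_of_sq_add_sq_recursion
    (hδ₁ : δ 1 = C 2 * X ^ 2) (hε₁ : ε 1 = X)
    (hδ : ∀ n ≥ 1, δ (n + 1) = δ n ^ 2 + ε n ^ 2)
    (hε : ∀ n ≥ 1, X * ε (n + 1) = δ n * ε n) {n : ℕ} (hn : 1 ≤ n) :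
    3 * (δ n).natTrailingDegree = (if Even n then 2 ^ n + 2 else 2 ^ n + 4) ∧
      3 * (ε n).natTrailingDegree = (if Even n then 2 ^ n + 2 else 2 ^ n + 1) := by
  have ne_zero {m : ℕ} (hm : 1 ≤ m) : δ m ≠ 0 ∧ ε m ≠ 0 :=
    ne_zero_of_sq_add_sq_recursion (by simp [hδ₁]) (by simp [hε₁]) hδ hε hm
  refine three_mul_eq_of_min_plus_recursion (d := fun m ↦ (δ m).natTrailingDegree)
    (e := fun m ↦ (ε m).natTrailingDegree) ?_ ?_ (fun m hm ↦ ?_) (fun m hm ↦ ?_) hn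
  · rw [hδ₁, C_mul_X_pow_eq_monomial, natTrailingDegree_monomial two_ne_zero]
  · rw [hε₁, natTrailingDegree_X]
  · rw [hδ m hm, natTrailingDegree_sq_add_sq (ne_zero hm).1 (ne_zero hm).2]
  · exact natTrailingDegree_add_one_of_X_mul_eq_mul (hε m hm) (ne_zero hm).1 (ne_zero hm).2

theorem stmt_12_general (hδ1 : δ 1 = C 2 * X ^ 2) (hε1 : ε 1 = X)
    (hδ : ∀ n, 2 ≤ n → δ n = δ (n - 1) ^ 2 + ε (n - 1) ^ 2)
    (hε : ∀ n, 2 ≤ n → X * ε n = δ (n - 1) * ε (n - 1)) {n : ℕ} (hn : 1 ≤ n) :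
    (δ n).natDegree = 2 ^ n ∧
    (δ n).natTrailingDegree = (if Even n then (2 ^ n + 2) / 3 else (2 ^ n + 4) / 3) ∧
    (ε n).natDegree = 2 ^ n - n ∧
    (ε n).natTrailingDegree = (if Even n then (2 ^ n + 2) / 3 else (2 ^ n + 1) / 3) := by
  have δ_succ (m : ℕ) (hm : m ≥ 1) : δ (m + 1) = δ m ^ 2 + ε m ^ 2 := hδ (m + 1) (by lia)
  have ε_succ (m : ℕ) (hm : m ≥ 1) : X * ε (m + 1) = δ m * ε m := hε (m + 1) (by lia)
  obtain ⟨δ_deg, ε_deg⟩ := natDegree_of_sq_add_sq_recursion hδ1 hε1 δ_succ ε_succ hn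
  obtain ⟨δ_trailing, ε_trailing⟩ :=
    three_mul_natTrailingDegree_of_sq_add_sq_recursion hδ1 hε1 δ_succ ε_succ hn
  refine ⟨δ_deg, ?_, by lia, ?_⟩ <;> split_ifs at δ_trailing ε_trailing ⊢ <;> lia

end OrderedSemiring

/-- for the sequences `δ_n, ε_n ∈ ℤ[k]` given by `δ_1 = 2k²`, `ε_1 = k`,
`δ_n = δ_{n−1}² + ε_{n−1}²` and `k·ε_n = δ_{n−1}·ε_{n−1}` (for `n ≥ 2`), and every `n ≥ 1`:
`deg δ_n = 2^n`, the trailing degree of `δ_n` is `(2^n + 2)/3` for even `n` and `(2^n + 4)/3`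
for odd `n`, `deg ε_n = 2^n − n`, and the trailing degree of `ε_n` is `(2^n + 2)/3` for even
`n` and `(2^n + 1)/3` for odd `n`. -/
theorem stmt_12 (δ ε : ℕ → Polynomial ℤ)
    (hδ1 : δ 1 = Polynomial.C 2 * Polynomial.X ^ 2)
    (hε1 : ε 1 = Polynomial.X)
    (hδ : ∀ n, 2 ≤ n → δ n = (δ (n - 1)) ^ 2 + (ε (n - 1)) ^ 2)
    (hε : ∀ n, 2 ≤ n → Polynomial.X * ε n = δ (n - 1) * ε (n - 1))
    (n : ℕ) (hn : 1 ≤ n) :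
    (δ n).natDegree = 2 ^ n ∧
    (δ n).natTrailingDegree = (if Even n then (2 ^ n + 2) / 3 else (2 ^ n + 4) / 3) ∧
    (ε n).natDegree = 2 ^ n - n ∧
    (ε n).natTrailingDegree = (if Even n then (2 ^ n + 2) / 3 else (2 ^ n + 1) / 3) :=
  stmt_12_general hδ1 hε1 hδ hε hn
end

section
/- For every n ≥ 2 the leading coefficient of the polynomial δ_n is a square in ℤ, and for every n ≥ 1 every coefficient of δ_n in odd degree vanishes (i.e., each nonzero term of δ_n has even degree). -/
/-!
Call a polynomial even if it lies in the subalgebra `R[X²]`. The `ε_n` themselves alternate between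
odd and even, but the squares `ε_n²` are all even: `X² ε_n² = δ_{n-1}² ε_{n-1}²`, and dividing by
`X²` shifts degrees by two. Hence every `δ_n` is even. Moreover `deg ε_n < deg δ_n` is preserved by
the recursion, so the term `δ_{n-1}²` alone determines the leading coefficient of `δ_n`.
-/

section

open Polynomial

section EvenPolynomials

variable {R : Type*} [CommSemiring R]

variable (R) in
/-- The subalgebra `R[X²]` of even polynomials. Taking it as the range of `X ↦ X²`, rather than as
the polynomials fixed by `X ↦ -X`, gives the right notion in characteristic two and over
semirings. -/
noncomputable def evenPolynomials : Subalgebra R R[X] := (expand R 2).range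

theorem mem_evenPolynomials_iff {p : R[X]} :
    p ∈ evenPolynomials R ↔ ∀ m, Odd m → p.coeff m = 0 := by
  constructor
  · rintro ⟨q, rfl⟩ m hm
    exact (coeff_expand two_pos q m).trans (if_neg hm.not_two_dvd_nat)
  · intro h
    refine ⟨contract 2 p, ?_⟩
    ext m
    change (expand R 2 (contract 2 p)).coeff m = p.coeff m
    rw [coeff_expand two_pos, coeff_contract two_ne_zero]
    split_ifs with hm
    · rw [Nat.div_mul_cancel hm]
    · exact (h m (Nat.not_even_iff_odd.mp (mt Even.two_dvd hm))).symm

theorem X_sq_mem_evenPolynomials : (X ^ 2 : R[X]) ∈ evenPolynomials R :=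
  ⟨X, expand_X 2⟩

theorem mem_evenPolynomials_of_X_sq_mul_mem {p : R[X]} (h : X ^ 2 * p ∈ evenPolynomials R) :
    p ∈ evenPolynomials R := by
  rw [mem_evenPolynomials_iff] at h ⊢
  intro m hm
  rw [← coeff_X_pow_mul p 2 m]
  exact h (m + 2) (hm.add_even even_two)

end EvenPolynomials

section Degree

variable {R : Type*} [CommSemiring R] [NoZeroDivisors R] {p q : R[X]}

theorem degree_mul_lt_degree_sq (h : q.degree < p.degree) : (p * q).degree < (p ^ 2).degree := by
  have hp : p.degree ≠ ⊥ := h.ne_bot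
  rw [sq, degree_mul, degree_mul]
  exact WithBot.add_lt_add_left hp h

theorem degree_sq_lt_degree_sq (h : q.degree < p.degree) : (q ^ 2).degree < (p ^ 2).degree := by
  calc (q ^ 2).degree = q.degree + q.degree := by rw [sq, degree_mul]
    _ ≤ p.degree + q.degree := by gcongr
    _ = (p * q).degree := degree_mul.symm
    _ < (p ^ 2).degree := degree_mul_lt_degree_sq h

theorem degree_lt_degree_sq_add_sq {r : R[X]} (h : q.degree < p.degree) (hr : X * r = p * q) :
    r.degree < (p ^ 2 + q ^ 2).degree := by
  have hr_le : r.degree ≤ (X * r).degree := by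
    rcases eq_or_ne r 0 with rfl | hr0
    · rw [mul_zero]
    · rw [mul_comm]
      exact (degree_lt_degree_mul_X hr0).le
  calc r.degree ≤ (X * r).degree := hr_le
    _ = (p * q).degree := by rw [hr]
    _ < (p ^ 2).degree := degree_mul_lt_degree_sq h
    _ = (p ^ 2 + q ^ 2).degree := (degree_add_eq_left_of_degree_lt (degree_sq_lt_degree_sq h)).symm

theorem leadingCoeff_sq_add_sq (h : q.degree < p.degree) :
    (p ^ 2 + q ^ 2).leadingCoeff = p.leadingCoeff ^ 2 := by
  rw [leadingCoeff_add_of_degree_lt' (degree_sq_lt_degree_sq h), leadingCoeff_pow]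

end Degree

section Recursion

variable {R : Type*} [CommSemiring R] {δ ε : ℕ → R[X]}

theorem mem_evenPolynomials_of_recursion
    (hδ1 : δ 1 ∈ evenPolynomials R) (hε1 : ε 1 ^ 2 ∈ evenPolynomials R)
    (hδ : ∀ n, 2 ≤ n → δ n = δ (n - 1) ^ 2 + ε (n - 1) ^ 2)
    (hε : ∀ n, 2 ≤ n → X * ε n = δ (n - 1) * ε (n - 1)) {n : ℕ} (hn : 1 ≤ n) :
    δ n ∈ evenPolynomials R ∧ ε n ^ 2 ∈ evenPolynomials R := by
  induction n, hn using Nat.le_induction with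
  | base => exact ⟨hδ1, hε1⟩
  | succ n hn ih =>
    obtain ⟨hδn, hεn⟩ := ih
    have hδ_succ : δ (n + 1) = δ n ^ 2 + ε n ^ 2 := hδ (n + 1) (by lia)
    have hε_succ : X * ε (n + 1) = δ n * ε n := hε (n + 1) (by lia)
    constructor
    · rw [hδ_succ]
      exact add_mem (pow_mem hδn 2) hεn
    · apply mem_evenPolynomials_of_X_sq_mul_mem
      rw [← mul_pow, hε_succ, mul_pow]
      exact mul_mem (pow_mem hδn 2) hεn

theorem degree_lt_degree_of_recursion [NoZeroDivisors R] (hdeg : (ε 1).degree < (δ 1).degree)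
    (hδ : ∀ n, 2 ≤ n → δ n = δ (n - 1) ^ 2 + ε (n - 1) ^ 2)
    (hε : ∀ n, 2 ≤ n → X * ε n = δ (n - 1) * ε (n - 1)) {n : ℕ} (hn : 1 ≤ n) :
    (ε n).degree < (δ n).degree := by
  induction n, hn using Nat.le_induction with
  | base => exact hdeg
  | succ n hn ih =>
    rw [hδ (n + 1) (by lia)]
    exact degree_lt_degree_sq_add_sq ih (hε (n + 1) (by lia))

end Recursion

theorem stmt_13_general {R : Type*} [CommSemiring R] [NoZeroDivisors R] (δ ε : ℕ → R[X])
    (hδ1 : δ 1 ∈ evenPolynomials R) (hε1 : ε 1 ^ 2 ∈ evenPolynomials R)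
    (hdeg : (ε 1).degree < (δ 1).degree)
    (hδ : ∀ n, 2 ≤ n → δ n = δ (n - 1) ^ 2 + ε (n - 1) ^ 2)
    (hε : ∀ n, 2 ≤ n → X * ε n = δ (n - 1) * ε (n - 1)) :
    (∀ n, 2 ≤ n → (δ n).leadingCoeff = (δ (n - 1)).leadingCoeff ^ 2) ∧
    (∀ n, 1 ≤ n → ∀ m : ℕ, Odd m → (δ n).coeff m = 0) := by
  constructor
  · intro n hn
    rw [hδ n hn]
    exact leadingCoeff_sq_add_sq (degree_lt_degree_of_recursion hdeg hδ hε (by lia))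
  · intro n hn
    exact mem_evenPolynomials_iff.mp (mem_evenPolynomials_of_recursion hδ1 hε1 hδ hε hn).1

end

/-- for the sequences `δ_n, ε_n ∈ ℤ[k]` given by `δ_1 = 2k²`, `ε_1 = k`,
`δ_n = δ_{n−1}² + ε_{n−1}²` and `k·ε_n = δ_{n−1}·ε_{n−1}` (for `n ≥ 2`): for every `n ≥ 2`
the leading coefficient of `δ_n` is a square in `ℤ`, and for every `n ≥ 1` every coefficient
of `δ_n` in odd degree vanishes. -/
theorem stmt_13 (δ ε : ℕ → Polynomial ℤ)
    (hδ1 : δ 1 = Polynomial.C 2 * Polynomial.X ^ 2)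
    (hε1 : ε 1 = Polynomial.X)
    (hδ : ∀ n, 2 ≤ n → δ n = (δ (n - 1)) ^ 2 + (ε (n - 1)) ^ 2)
    (hε : ∀ n, 2 ≤ n → Polynomial.X * ε n = δ (n - 1) * ε (n - 1)) :
    (∀ n, 2 ≤ n → ∃ a : ℤ, (δ n).leadingCoeff = a ^ 2) ∧
    (∀ n, 1 ≤ n → ∀ m : ℕ, Odd m → (δ n).coeff m = 0) := by
  have hδ1_even : δ 1 ∈ evenPolynomials ℤ :=
    hδ1 ▸ mul_mem (Subalgebra.algebraMap_mem _ 2) X_sq_mem_evenPolynomials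
  have hε1_sq_even : ε 1 ^ 2 ∈ evenPolynomials ℤ := hε1 ▸ X_sq_mem_evenPolynomials
  have hdeg : (ε 1).degree < (δ 1).degree := by
    rw [hδ1, hε1, Polynomial.degree_C_mul_X_pow 2 two_ne_zero, Polynomial.degree_X]
    norm_num
  obtain ⟨hlead, hodd⟩ := stmt_13_general δ ε hδ1_even hε1_sq_even hdeg hδ hε
  exact ⟨fun n hn ↦ ⟨_, hlead n hn⟩, hodd⟩
end

section
/- Let f ∈ ℤ[k] be a polynomial whose degree is positive and even and whose leading coefficient is a square in ℤ. If the set of integers k₀ such that f(k₀) is a square in ℤ is infinite, then f is the square of a polynomial: there exists g ∈ ℚ[k] such that f = g² in ℚ[k]. -/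
/-!
If `f` has even degree and square leading coefficient, then Newton's iteration
`g ↦ g + (f - g²) / (2g)`, with division truncated to polynomials, produces `g` such that
`deg (f - g²) < deg g`. After clearing denominators, whenever `f(k)` is a square, `f(k)` and `g(k)²`
are two integer squares whose distance is less than `|g(k)|` for all but finitely many `k`, which
forces them to be equal. Hence `f - g²` has infinitely many roots.
-/

open Polynomial

section SquareRootApproximation

variable {K : Type*} [Field K] [NeZero (2 : K)]

theorem exists_degree_lt_and_degree_sub_add_sq_lt {f g : K[X]}
    (hsq : (f - g ^ 2).degree < (g ^ 2).degree) (hle : g.degree ≤ (f - g ^ 2).degree) :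
    ∃ q : K[X], q.degree < g.degree ∧ (f - (g + q) ^ 2).degree < (f - g ^ 2).degree := by
  have hg : g ≠ 0 := by
    rintro rfl
    simp at hsq
  set r := f - g ^ 2 with hr
  set q := C 2⁻¹ * (r / g) with hq
  have degree_q : g.degree + q.degree = r.degree := by
    rw [hq, degree_C_mul (inv_ne_zero two_ne_zero), degree_add_div hg hle]
  have q_lt : q.degree < g.degree := by
    rw [sq, degree_mul, ← degree_q] at hsq
    exact lt_of_add_lt_add_left hsq
  have hq0 : q.degree ≠ ⊥ := by
    intro h
    rw [h, WithBot.add_bot] at degree_q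
    exact hg (degree_eq_bot.mp (le_bot_iff.mp (hle.trans_eq degree_q.symm)))
  have q_sq_lt : (q ^ 2).degree < r.degree := by
    rw [sq, degree_mul, ← degree_q]
    exact WithBot.add_lt_add_right hq0 q_lt
  have two_mul_q : 2 * q = r / g := by
    rw [hq, ← C_ofNat, ← mul_assoc, ← C_mul, mul_inv_cancel₀ two_ne_zero, C_1, one_mul]
  have remainder : f - (g + q) ^ 2 = r % g - q ^ 2 := by
    linear_combination (-g) * two_mul_q - EuclideanDomain.div_add_mod r g - hr
  refine ⟨q, q_lt, ?_⟩
  rw [remainder]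
  exact (degree_sub_le _ _).trans_lt (max_lt ((degree_mod_lt r hg).trans_le hle) q_sq_lt)

theorem exists_degree_sub_sq_lt_degree_of_degree_sub_sq_lt (f g : K[X])
    (h : (f - g ^ 2).degree < (g ^ 2).degree) : ∃ s : K[X], (f - s ^ 2).degree < s.degree := by
  induction hd : (f - g ^ 2).degree using WellFoundedLT.induction generalizing g with
  | ind d ih =>
    subst hd
    rcases lt_or_ge (f - g ^ 2).degree g.degree with hlt | hle
    · exact ⟨g, hlt⟩
    · obtain ⟨q, q_lt, sub_lt⟩ := exists_degree_lt_and_degree_sub_add_sq_lt h hle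
      refine ih _ sub_lt (g + q) (sub_lt.trans ?_) rfl
      rwa [degree_pow, degree_add_eq_left_of_degree_lt q_lt, ← degree_pow]

theorem exists_degree_sub_sq_lt_degree {f : K[X]} (hf : f ≠ 0) (heven : Even f.natDegree)
    (hlead : IsSquare f.leadingCoeff) : ∃ s : K[X], (f - s ^ 2).degree < s.degree := by
  obtain ⟨n, hn⟩ := heven
  obtain ⟨a, ha⟩ := hlead
  have ha0 : a * a ≠ 0 := ha ▸ leadingCoeff_ne_zero.mpr hf
  have leading_term : (C a * X ^ n) ^ 2 = C (a * a) * X ^ (n + n) := by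
    rw [C_mul]
    ring
  have degree_eq : f.degree = ((C a * X ^ n) ^ 2).degree := by
    rw [leading_term, degree_C_mul_X_pow _ ha0, degree_eq_natDegree hf, hn]
  apply exists_degree_sub_sq_lt_degree_of_degree_sub_sq_lt f (C a * X ^ n)
  rw [← degree_eq]
  refine degree_sub_lt_left degree_eq hf ?_
  rw [leading_term, leadingCoeff_C_mul_X_pow, ha]

end SquareRootApproximation

theorem sq_eq_sq_of_abs_sq_sub_sq_lt_abs {x y : ℤ} (h : |x ^ 2 - y ^ 2| < |y|) :
    x ^ 2 = y ^ 2 := by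
  have factor : x ^ 2 - y ^ 2 = (|x| + |y|) * (|x| - |y|) := by
    rw [← sq_sub_sq, sq_abs, sq_abs]
  have h_lt : |x ^ 2 - y ^ 2| < |x| + |y| := h.trans_le (le_add_of_nonneg_left (abs_nonneg x))
  exact sub_eq_zero.mp (Int.eq_zero_of_abs_lt_dvd ⟨_, factor⟩ h_lt)

theorem eq_sq_of_infinite_isSquare_eval_int {f g : ℤ[X]} (hdeg : (f - g ^ 2).degree < g.degree)
    (hinf : {k : ℤ | IsSquare (f.eval k)}.Infinite) : f = g ^ 2 := by
  refine eq_of_infinite_eval_eq f (g ^ 2)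
    ((hinf.sdiff (finite_abs_eval_le_of_degree_lt hdeg)).mono ?_)
  rintro k ⟨hsq, hlarge⟩
  obtain ⟨x, hx⟩ := isSquare_iff_exists_sq _ |>.mp hsq
  have hclose : |x ^ 2 - g.eval k ^ 2| < |g.eval k| := by
    simpa only [Set.mem_ofPred_eq, not_le, eval_sub, eval_pow, hx] using hlarge
  simpa only [Set.mem_ofPred_eq, eval_pow, hx] using sq_eq_sq_of_abs_sq_sub_sq_lt_abs hclose

section ClearingDenominators

variable {A S : Type*} [CommRing A] [CommRing S] [Algebra A S] (M : Submonoid A)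
  [IsLocalization M S]

theorem exists_mem_map_eq_C_mul (p : S[X]) :
    ∃ d ∈ M, ∃ P : A[X], P.map (algebraMap A S) = C (algebraMap A S d) * p := by
  obtain ⟨d, hd, hP⟩ := IsLocalization.integerNormalization_spec M p
  refine ⟨d, hd, _, hP.trans ?_⟩
  rw [← smul_eq_C_mul, algebraMap_smul]

theorem exists_mem_map_eq_C_sq_mul_and_map_eq_C_mul (f g : S[X]) :
    ∃ d ∈ M, ∃ F G : A[X], F.map (algebraMap A S) = C (algebraMap A S d) ^ 2 * f ∧
      G.map (algebraMap A S) = C (algebraMap A S d) * g := by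
  obtain ⟨b, hb, F, hF⟩ := exists_mem_map_eq_C_mul M f
  obtain ⟨c, hc, G, hG⟩ := exists_mem_map_eq_C_mul M g
  refine ⟨b * c, mul_mem hb hc, C (b * c ^ 2) * F, C b * G, ?_, ?_⟩
  · simp only [Polynomial.map_mul, Polynomial.map_pow, map_C, hF, C_pow, map_mul]
    ring
  · simp only [Polynomial.map_mul, map_C, hG, map_mul]
    ring

end ClearingDenominators

theorem eq_sq_of_infinite_isSquare_eval_rat {f g : ℚ[X]} (hdeg : (f - g ^ 2).degree < g.degree)
    (hinf : {k : ℤ | IsSquare (f.eval (k : ℚ))}.Infinite) : f = g ^ 2 := by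
  obtain ⟨d, hd, F, G, hF, hG⟩ :=
    exists_mem_map_eq_C_sq_mul_and_map_eq_C_mul (nonZeroDivisors ℤ) f g
  have hd' : algebraMap ℤ ℚ d ≠ 0 := by simpa using nonZeroDivisors.ne_zero hd
  have map_F_sub : (F - G ^ 2).map (algebraMap ℤ ℚ) = C (algebraMap ℤ ℚ d) ^ 2 * (f - g ^ 2) := by
    rw [Polynomial.map_sub, Polynomial.map_pow, hF, hG]
    ring
  have degree_lt : (F - G ^ 2).degree < G.degree := by
    have hinj : Function.Injective (algebraMap ℤ ℚ) := FaithfulSMul.algebraMap_injective ℤ ℚ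
    rwa [← degree_map_eq_of_injective hinj, ← degree_map_eq_of_injective hinj (p := G), map_F_sub,
      hG, ← C_pow, degree_C_mul (pow_ne_zero 2 hd'), degree_C_mul hd']
  have isSquare_eval {k : ℤ} (hk : IsSquare (f.eval (k : ℚ))) : IsSquare (F.eval k) := by
    have eval_F : ((F.eval k : ℤ) : ℚ) = algebraMap ℤ ℚ d ^ 2 * f.eval (k : ℚ) :=
      (eval_intCast_map (algebraMap ℤ ℚ) F k).symm.trans (by rw [hF, eval_mul, eval_pow, eval_C])
    rw [← Rat.isSquare_intCast_iff, eval_F]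
    exact (IsSquare.sq _).mul hk
  have F_eq : F = G ^ 2 :=
    eq_sq_of_infinite_isSquare_eval_int degree_lt (hinf.mono fun _ => isSquare_eval)
  rw [F_eq, sub_self, Polynomial.map_zero, eq_comm, mul_eq_zero] at map_F_sub
  exact sub_eq_zero.mp (map_F_sub.resolve_left (pow_ne_zero 2 (C_ne_zero.mpr hd')))

theorem stmt_15_general {f : ℚ[X]} (heven : Even f.natDegree) (hlead : IsSquare f.leadingCoeff)
    (hinf : {k : ℤ | IsSquare (f.eval (k : ℚ))}.Infinite) : IsSquare f := by
  rcases eq_or_ne f 0 with rfl | hf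
  · exact IsSquare.zero
  · obtain ⟨g, hg⟩ := exists_degree_sub_sq_lt_degree hf heven hlead
    exact eq_sq_of_infinite_isSquare_eval_rat hg hinf ▸ IsSquare.sq g

/-- let `f ∈ ℤ[k]` have positive even degree and square leading coefficient.
If `f(k₀)` is a square in `ℤ` for infinitely many integers `k₀`, then `f` is the square of a
polynomial `g ∈ ℚ[k]`. -/
theorem stmt_15 (f : Polynomial ℤ) (hdeg : 0 < f.natDegree) (heven : Even f.natDegree)
    (hlead : ∃ a : ℤ, f.leadingCoeff = a ^ 2)
    (hinf : {k₀ : ℤ | ∃ a : ℤ, f.eval k₀ = a ^ 2}.Infinite) :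
    ∃ g : Polynomial ℚ, f.map (Int.castRingHom ℚ) = g ^ 2 := by
  have hinj : Function.Injective (Int.castRingHom ℚ) := Int.cast_injective
  simp only [← isSquare_iff_exists_sq] at hlead hinf ⊢
  refine stmt_15_general ?_ ?_ (hinf.mono fun k hk => ?_)
  · rwa [natDegree_map_eq_of_injective hinj]
  · rw [leadingCoeff_map_of_injective hinj]
    exact hlead.map _
  · rw [Set.mem_ofPred_eq, eval_intCast_map]
    exact hk.map _
end

section
/- Let k₀ be an integer whose residue modulo 11 lies in {1, 2, 5, 6, 9, 10}. Then for every n ≥ 1, the integer δ_n(k₀) is not a square in ℤ. -/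
/-!
Dividing out the powers of `k`, write `δ_{n+1} = k² D_n` and `ε_{n+1}² = k² S_n`. With `c = k²` the
recurrence becomes `(D, S) ↦ (c D² + S, c D² S)` started at `(2, 1)`, and for `k ≠ 0` the integer
`δ_{n+1}(k)` is a square exactly when `D_n` is. The residue condition on `k` says that `c` is `1`,
`3` or `4` modulo `11`. For these `c` the orbit modulo `11` is periodic from `n = 2` on, and no
`D_n` with `n ≠ 1` is a square modulo `11`. The remaining value `D_1 = (2k)² + 1` may be one (it is
`5 = 4²` when `c = 1`), but it is never the square of an integer.
-/

open Polynomial Function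

section ReducedRecurrence

variable {R S : Type*} [CommSemiring R] [CommSemiring S]

/-- One step of the recurrence for `(δ_n / k², ε_n² / k²)`, as a self-map of `R × R` depending only
on `c = k²`. -/
def reducedStep (c : R) (p : R × R) : R × R :=
  (c * p.1 ^ 2 + p.2, c * p.1 ^ 2 * p.2)

/-- The quotient `δ_{n+1} / k²` as a function of `c = k²`; the index is shifted so that the orbit
starts at `n = 0`. -/
def reducedDelta (c : R) (n : ℕ) : R :=
  ((reducedStep c)^[n] (2, 1)).1

/-- The quotient `ε_{n+1}² / k²` as a function of `c = k²`, indexed like `reducedDelta`. -/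
def reducedEpsSq (c : R) (n : ℕ) : R :=
  ((reducedStep c)^[n] (2, 1)).2

theorem map_reducedDelta (f : R →+* S) (c : R) (n : ℕ) :
    f (reducedDelta c n) = reducedDelta (f c) n := by
  have semiconj : Semiconj (Prod.map f f) (reducedStep c) (reducedStep (f c)) := fun p ↦ by
    simp [reducedStep]
  simpa [reducedDelta, map_ofNat] using congrArg Prod.fst (semiconj.iterate_right n (2, 1))

theorem reducedDelta_one (c : R) : reducedDelta c 1 = 4 * c + 1 := by
  rw [reducedDelta, iterate_one, reducedStep]
  ring

theorem reducedDelta_succ (c : R) (n : ℕ) :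
    reducedDelta c (n + 1) = c * reducedDelta c n ^ 2 + reducedEpsSq c n := by
  simp only [reducedDelta, reducedEpsSq, iterate_succ_apply', reducedStep]

theorem reducedEpsSq_succ (c : R) (n : ℕ) :
    reducedEpsSq c (n + 1) = c * reducedDelta c n ^ 2 * reducedEpsSq c n := by
  simp only [reducedDelta, reducedEpsSq, iterate_succ_apply', reducedStep]

theorem delta_and_eps_sq_eq_sq_mul_reduced [IsCancelMulZero R] {k : R} {δ ε : ℕ → R} (hk : k ≠ 0)
    (hδ1 : δ 1 = 2 * k ^ 2) (hε1 : ε 1 = k)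
    (hδ : ∀ n, 2 ≤ n → δ n = δ (n - 1) ^ 2 + ε (n - 1) ^ 2)
    (hε : ∀ n, 2 ≤ n → k * ε n = δ (n - 1) * ε (n - 1)) (n : ℕ) :
    δ (n + 1) = k ^ 2 * reducedDelta (k ^ 2) n ∧
      ε (n + 1) ^ 2 = k ^ 2 * reducedEpsSq (k ^ 2) n := by
  induction n with
  | zero => simp [reducedDelta, reducedEpsSq, hδ1, hε1, mul_comm]
  | succ n ih =>
    obtain ⟨ihδ, ihε⟩ := ih
    have δ_succ : δ (n + 2) = δ (n + 1) ^ 2 + ε (n + 1) ^ 2 := hδ (n + 2) (by lia)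
    have ε_succ : k * ε (n + 2) = δ (n + 1) * ε (n + 1) := hε (n + 2) (by lia)
    constructor
    · rw [δ_succ, ihδ, ihε, reducedDelta_succ]
      ring
    · apply mul_left_cancel₀ (pow_ne_zero 2 hk)
      rw [← mul_pow, ε_succ, mul_pow, ihδ, ihε, reducedEpsSq_succ]
      ring

end ReducedRecurrence

theorem isSquare_sq_mul_iff {R : Type*} [CommRing R] [IsDomain R] [IsIntegrallyClosed R] {k x : R}
    (hk : k ≠ 0) : IsSquare (k ^ 2 * x) ↔ IsSquare x := by
  refine ⟨fun h ↦ ?_, (IsSquare.sq k).mul⟩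
  obtain ⟨a, ha⟩ := (isSquare_iff_exists_sq _).1 h
  obtain ⟨b, rfl⟩ : k ∣ a := (IsIntegrallyClosed.pow_dvd_pow_iff two_ne_zero).1 ⟨x, ha.symm⟩
  rw [mul_pow] at ha
  exact (isSquare_iff_exists_sq _).2 ⟨b, mul_left_cancel₀ (pow_ne_zero 2 hk) ha⟩

theorem not_isSquare_int_sq_add_one {m : ℤ} (hm : m ≠ 0) : ¬IsSquare (m ^ 2 + 1) := by
  rintro ⟨a, ha⟩
  have factored : (a - m) * (a + m) = 1 := by linear_combination -ha
  rcases Int.mul_eq_one_iff_eq_one_or_neg_one.1 factored with h | h <;> lia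

section ModEleven

variable {c : ZMod 11}

theorem isPeriodicPt_reducedStep_mod_eleven (hc : c ∈ ({1, 3, 4} : Finset (ZMod 11))) :
    IsPeriodicPt (reducedStep c) 4 ((reducedStep c)^[2] (2, 1)) := by
  revert c
  decide

theorem not_isSquare_reducedDelta_mod_eleven_of_lt_six
    (hc : c ∈ ({1, 3, 4} : Finset (ZMod 11))) :
    ∀ n < 6, n ≠ 1 → ¬IsSquare (reducedDelta c n) := by
  revert c
  decide

theorem not_isSquare_reducedDelta_mod_eleven (hc : c ∈ ({1, 3, 4} : Finset (ZMod 11)))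
    {n : ℕ} (hn : n ≠ 1) : ¬IsSquare (reducedDelta c n) := by
  rcases lt_or_ge n 2 with hn2 | hn2
  · exact not_isSquare_reducedDelta_mod_eleven_of_lt_six hc n (by lia) hn
  · obtain ⟨m, rfl⟩ := Nat.exists_eq_add_of_le' hn2
    have reduce_index : reducedDelta c (m + 2) = reducedDelta c (m % 4 + 2) := by
      rw [reducedDelta, reducedDelta, iterate_add_apply, iterate_add_apply,
        (isPeriodicPt_reducedStep_mod_eleven hc).iterate_mod_apply]
    rw [reduce_index]
    exact not_isSquare_reducedDelta_mod_eleven_of_lt_six hc _ (by lia) (by lia)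

theorem sq_mem_of_mem_residues_mod_eleven {k : ZMod 11}
    (hk : k ∈ ({1, 2, 5, 6, 9, 10} : Set (ZMod 11))) :
    k ^ 2 ∈ ({1, 3, 4} : Finset (ZMod 11)) := by
  rcases hk with rfl | rfl | rfl | rfl | rfl | rfl <;> decide

theorem ne_zero_of_sq_mem_mod_eleven {k : ℤ}
    (hk11 : (k : ZMod 11) ^ 2 ∈ ({1, 3, 4} : Finset (ZMod 11))) : k ≠ 0 := by
  rintro rfl
  exact absurd hk11 (by decide)

end ModEleven

theorem not_isSquare_reducedDelta_sq {k : ℤ}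
    (hk11 : (k : ZMod 11) ^ 2 ∈ ({1, 3, 4} : Finset (ZMod 11))) (n : ℕ) :
    ¬IsSquare (reducedDelta (k ^ 2) n) := by
  rcases eq_or_ne n 1 with rfl | hn
  · have sq_add_one : reducedDelta (k ^ 2) 1 = (2 * k) ^ 2 + 1 := by rw [reducedDelta_one]; ring
    rw [sq_add_one]
    exact not_isSquare_int_sq_add_one <|
      mul_ne_zero two_ne_zero (ne_zero_of_sq_mem_mod_eleven hk11)
  · intro h
    have isSquare_mod_eleven := h.map (Int.castRingHom (ZMod 11))
    rw [map_reducedDelta, map_pow] at isSquare_mod_eleven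
    exact not_isSquare_reducedDelta_mod_eleven hk11 hn isSquare_mod_eleven

/-- for the sequences `δ_n, ε_n ∈ ℤ[k]` given by `δ_1 = 2k²`, `ε_1 = k`,
`δ_n = δ_{n−1}² + ε_{n−1}²` and `k·ε_n = δ_{n−1}·ε_{n−1}` (for `n ≥ 2`): if the residue of
`k₀` modulo `11` lies in `{1, 2, 5, 6, 9, 10}`, then for every `n ≥ 1` the integer `δ_n(k₀)`
is not a square in `ℤ`. -/
theorem stmt_17 (δ ε : ℕ → Polynomial ℤ)
    (hδ1 : δ 1 = Polynomial.C 2 * Polynomial.X ^ 2)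
    (hε1 : ε 1 = Polynomial.X)
    (hδ : ∀ n, 2 ≤ n → δ n = (δ (n - 1)) ^ 2 + (ε (n - 1)) ^ 2)
    (hε : ∀ n, 2 ≤ n → Polynomial.X * ε n = δ (n - 1) * ε (n - 1))
    (k₀ : ℤ) (hk : (k₀ : ZMod 11) ∈ ({1, 2, 5, 6, 9, 10} : Set (ZMod 11))) :
    ∀ n, 1 ≤ n → ¬ ∃ a : ℤ, (δ n).eval k₀ = a ^ 2 := by
  have hk11 := sq_mem_of_mem_residues_mod_eleven hk
  have hk0 : k₀ ≠ 0 := ne_zero_of_sq_mem_mod_eleven hk11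
  rintro n hn ⟨a, ha⟩
  obtain ⟨m, rfl⟩ := Nat.exists_eq_add_of_le' hn
  have eval_delta : (δ (m + 1)).eval k₀ = k₀ ^ 2 * reducedDelta (k₀ ^ 2) m := by
    rw [(delta_and_eps_sq_eq_sq_mul_reduced X_ne_zero hδ1 hε1 hδ hε m).1, ← coe_evalRingHom,
      map_mul, map_reducedDelta]
    simp
  have delta_isSquare : IsSquare (k₀ ^ 2 * reducedDelta (k₀ ^ 2) m) :=
    ⟨a, by rw [← eval_delta, ha, sq]⟩
  exact not_isSquare_reducedDelta_sq hk11 m ((isSquare_sq_mul_iff hk0).1 delta_isSquare)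
end

section
/- Let φ(X) = X² + X ∈ ℚ[X]. Then for every n ≥ 1, the splitting field K_n of the n-fold iterate φ^{∘n} over ℚ satisfies [K_n : ℚ] = 2^(2^(n−1) − 1); in other words, the Galois group of φ^{∘n} over ℚ has the maximal possible order 2^(2^(n−1)−1), equal to the order of the automorphism group of the complete binary tree of height n−1. -/
open Polynomial

/-- The `n`-fold iterate (composition) of a polynomial, with `iterComp p 0 = X`. -/
noncomputable def iterComp (p : ℚ[X]) : ℕ → ℚ[X]
  | 0 => X
  | n + 1 => p.comp (iterComp p n)

/-- The splitting field of a rational polynomial inside a fixed algebraic closure of `ℚ`: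
the intermediate field generated by its set of roots. -/
noncomputable def splitFld (p : ℚ[X]) : IntermediateField ℚ (AlgebraicClosure ℚ) :=
  IntermediateField.adjoin ℚ (p.rootSet (AlgebraicClosure ℚ))

/-!
Let `φ(x) = x² + x`. Since `φⁿ⁺¹(x) = φⁿ(x) (φⁿ(x) + 1)`, the splitting field of `φⁿ⁺¹` is the
field `Lₙ` generated by the solutions of `φⁿ(x) = -1`, and `Lₙ₊₁` arises from `Lₙ` by adjoining
`√(1 + 4x)` for these solutions `x`. The degree is maximal as soon as, at every level, the `2ⁿ`
numbers `1 + 4x` are independent modulo squares of `Lₙ`.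

The relations among them form an `𝔽₂`-vector space on which the 2-group `Gal(Lₙ/ℚ)` acts. If it is
nonzero, it contains a nonzero fixed vector, and because the action on the solutions is transitive
this is the all-ones vector: the integer `Δₙ = ∏ (1 + 4x)` is a square in `Lₙ`. By the same
transitivity, descending through the tower, `Δₙ` times a product of some `Δⱼ` with `j < n` is then
a rational square. But the `Δⱼ` are pairwise coprime, because they are odd and `Δⱼ` divides the
numbers `4 ^ 2ⁱ * φⁱ(-1/4)` with `i > j`, and none of them is plus or minus a square, because each
is `2` or `3` modulo `5`.
-/

namespace Arboreal

open Module
open scoped IntermediateField Pointwise symmDiff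

section TwoGroup

variable {G X : Type*} [Group G] [MulAction G X] [DecidableEq X]

lemma two_dvd_card_of_symmDiff_mem [Finite X] {𝒮 : Set (Finset X)}
    (hsymm : ∀ S ∈ 𝒮, ∀ T ∈ 𝒮, S ∆ T ∈ 𝒮) {S : Finset X} (hS : S ∈ 𝒮) (hne : S.Nonempty) :
    2 ∣ Nat.card 𝒮 := by
  classical
  have := Fintype.ofFinite X
  let translate : Function.End 𝒮 := fun T ↦ ⟨T ∆ S, hsymm T T.2 S hS⟩
  have hinvol : translate ^ 2 ^ 1 = 1 :=
    funext fun T ↦ Subtype.ext (symmDiff_symmDiff_cancel_right S T.1)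
  have hfixed : IsEmpty (Function.fixedPoints translate) :=
    ⟨fun T ↦ hne.ne_empty (symmDiff_eq_left.mp (congrArg Subtype.val T.2))⟩
  have hcard := Equiv.Perm.card_fixedPoints_modEq hinvol
  rwa [Fintype.card_eq_zero_iff.mpr hfixed, Nat.modEq_zero_iff_dvd,
    ← Nat.card_eq_fintype_card] at hcard

lemma eq_univ_of_forall_smul_eq [Fintype X] [MulAction.IsPretransitive G X] {S : Finset X}
    (hne : S.Nonempty) (hS : ∀ g : G, g • S = S) : S = Finset.univ := by
  obtain ⟨x, hx⟩ := hne
  refine Finset.eq_univ_of_forall fun y ↦ ?_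
  obtain ⟨g, rfl⟩ := MulAction.exists_smul_eq G x y
  rw [← hS g]
  exact Finset.smul_mem_smul_finset hx

theorem univ_mem_of_isPGroup [Fintype X] [MulAction.IsPretransitive G X]
    (hG : IsPGroup 2 G) (𝒮 : SubMulAction G (Finset X)) (hsymm : ∀ S ∈ 𝒮, ∀ T ∈ 𝒮, S ∆ T ∈ 𝒮)
    {S : Finset X} (hS : S ∈ 𝒮) (hne : S.Nonempty) : Finset.univ ∈ 𝒮 := by
  have hempty : ∅ ∈ 𝒮 := by simpa using hsymm S hS S hS
  obtain ⟨⟨T, hT⟩, hTfixed, hTne⟩ :=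
    hG.exists_fixed_point_of_prime_dvd_card_of_fixed_point 𝒮
      (two_dvd_card_of_symmDiff_mem hsymm hS hne) (a := ⟨∅, hempty⟩)
      fun g ↦ Subtype.ext (Finset.smul_finset_empty g)
  have hTne' : T.Nonempty :=
    Finset.nonempty_iff_ne_empty.mpr fun h ↦ hTne (Subtype.ext h.symm)
  rwa [← eq_univ_of_forall_smul_eq hTne' fun g : G ↦ congrArg Subtype.val (hTfixed g)]

end TwoGroup

section Multiquadratic

variable {k Ω ι : Type*} [Field k] [Field Ω] [Algebra k Ω] {F : IntermediateField k Ω}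

lemma mem_of_sq_eq_sq {u v : Ω} (h : u ^ 2 = v ^ 2) (hv : v ∈ F) : u ∈ F := by
  rcases sq_eq_sq_iff_eq_or_eq_neg.mp h with rfl | rfl
  · exact hv
  · exact neg_mem hv

lemma isIntegral_of_sq_mem {r : Ω} (hr : r ^ 2 ∈ F) : IsIntegral F r :=
  .of_pow two_pos (isIntegral_algebraMap (x := (⟨r ^ 2, hr⟩ : F)))

lemma exists_eq_add_mul_of_mem_sup_adjoin {r y : Ω} (hr : r ^ 2 ∈ F) (hy : y ∈ F ⊔ k⟮r⟯) :
    ∃ u ∈ F, ∃ v ∈ F, y = u + v * r := by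
  have hy' : y ∈ Algebra.adjoin F {r} := by
    rwa [← IntermediateField.adjoin_simple_toSubalgebra_of_isAlgebraic
        (isIntegral_of_sq_mem hr).isAlgebraic, IntermediateField.mem_toSubalgebra,
      ← IntermediateField.mem_restrictScalars k, IntermediateField.restrictScalars_adjoin_eq_sup]
  clear hy
  induction hy' using Algebra.adjoin_induction with
  | mem x hx => exact ⟨0, zero_mem F, 1, one_mem F, by simpa using hx⟩
  | algebraMap a => exact ⟨a, a.2, 0, zero_mem F, by simp⟩
  | add x y _ _ hx hy =>
    obtain ⟨⟨u, hu, v, hv, rfl⟩, u', hu', v', hv', rfl⟩ := And.intro hx hy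
    exact ⟨u + u', add_mem hu hu', v + v', add_mem hv hv', by ring⟩
  | mul x y _ _ hx hy =>
    obtain ⟨⟨u, hu, v, hv, rfl⟩, u', hu', v', hv', rfl⟩ := And.intro hx hy
    exact ⟨u * u' + v * v' * r ^ 2, add_mem (mul_mem hu hu') (mul_mem (mul_mem hv hv') hr),
      u * v' + v * u', add_mem (mul_mem hu hv') (mul_mem hv hu'), by ring⟩

lemma mem_or_mul_mem_of_sq_mem [NeZero (2 : Ω)] {r y : Ω} (hr : r ^ 2 ∈ F) (hy : y ∈ F ⊔ k⟮r⟯)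
    (hy2 : y ^ 2 ∈ F) : y ∈ F ∨ y * r ∈ F := by
  obtain ⟨u, hu, v, hv, rfl⟩ := exists_eq_add_mul_of_mem_sup_adjoin hr hy
  by_cases huv : 2 * u * v = 0
  · obtain rfl | rfl : u = 0 ∨ v = 0 := by simpa [NeZero.ne (2 : Ω)] using huv
    · exact .inr (by simpa [mul_assoc, ← sq] using mul_mem hv hr)
    · exact .inl (by simpa using hu)
  · have hcross : 2 * u * v * r ∈ F := by
      have := sub_mem hy2 (add_mem (pow_mem hu 2) (mul_mem (pow_mem hv 2) hr))
      convert this using 1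
      ring
    have hrF : r ∈ F := by
      have := div_mem hcross (mul_mem (mul_mem (ofNat_mem F 2) hu) hv)
      rwa [mul_div_cancel_left₀ _ huv] at this
    exact .inl (add_mem hu (mul_mem hv hrF))

lemma finrank_sup_adjoin_of_sq_mem {r : Ω} (hr : r ^ 2 ∈ F) (hrF : r ∉ F) :
    finrank k ↥(F ⊔ k⟮r⟯) = finrank k F * 2 := by
  have hint := isIntegral_of_sq_mem hr
  have hdeg : finrank F F⟮r⟯ = 2 := by
    rw [IntermediateField.adjoin.finrank hint]
    refine le_antisymm ?_ ((minpoly.two_le_natDegree_iff hint).mpr ?_)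
    · have hroot : aeval r (X ^ 2 - C (⟨r ^ 2, hr⟩ : F)) = 0 := by
        simp [IntermediateField.algebraMap_apply]
      simpa using natDegree_le_of_dvd (minpoly.dvd F r hroot) (X_pow_sub_C_ne_zero two_pos _)
    · rintro ⟨x, rfl⟩
      exact hrF x.2
  rw [← IntermediateField.restrictScalars_adjoin_eq_sup, ← hdeg]
  exact (finrank_mul_finrank k F F⟮r⟯).symm

lemma sup_adjoin_image_insert [DecidableEq ι] (r : ι → Ω) (i : ι) (S : Finset ι) :
    F ⊔ .adjoin k (r '' ↑(insert i S)) = (F ⊔ .adjoin k (r '' S)) ⊔ k⟮r i⟯ := by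
  rw [Finset.coe_insert, Set.image_insert_eq, Set.insert_eq, IntermediateField.adjoin_union,
    sup_assoc, sup_comm k⟮r i⟯]

theorem exists_mul_prod_mem_of_sq_mem [NeZero (2 : Ω)] {r : ι → Ω} (hr : ∀ i, r i ^ 2 ∈ F)
    {S : Finset ι} {y : Ω} (hy : y ∈ F ⊔ .adjoin k (r '' S)) (hy2 : y ^ 2 ∈ F) :
    ∃ T ⊆ S, y * ∏ i ∈ T, r i ∈ F := by
  classical
  induction S using Finset.induction_on generalizing y with
  | empty => exact ⟨∅, subset_rfl, by simpa using hy⟩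
  | insert i S hi ih =>
    rw [sup_adjoin_image_insert] at hy
    have hF : F ≤ F ⊔ .adjoin k (r '' S) := le_sup_left
    obtain hy | hyr := mem_or_mul_mem_of_sq_mem (hF (hr i)) hy (hF hy2)
    · obtain ⟨T, hTS, hT⟩ := ih hy hy2
      exact ⟨T, hTS.trans (Finset.subset_insert i S), hT⟩
    · obtain ⟨T, hTS, hT⟩ := ih hyr (by rw [mul_pow]; exact mul_mem hy2 (hr i))
      refine ⟨insert i T, Finset.insert_subset_insert i hTS, ?_⟩
      rwa [Finset.prod_insert fun h ↦ hi (hTS h), ← mul_assoc]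

/-- The square roots `r i` are multiplicatively independent modulo `F`: when every `r i ^ 2` lies
in `F`, the classes of the `r i ^ 2` in `Fˣ / Fˣ²` are linearly independent over `𝔽₂`. -/
def SqrtIndependent (F : IntermediateField k Ω) (r : ι → Ω) : Prop :=
  ∀ ⦃S : Finset ι⦄, S.Nonempty → ∏ i ∈ S, r i ∉ F

lemma SqrtIndependent.notMem {r : ι → Ω} (h : SqrtIndependent F r) (i : ι) : r i ∉ F := by
  simpa using h (Finset.singleton_nonempty i)

theorem SqrtIndependent.finrank_sup_adjoin_image [NeZero (2 : Ω)] {r : ι → Ω}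
    (h : SqrtIndependent F r) (hr : ∀ i, r i ^ 2 ∈ F) (S : Finset ι) :
    finrank k ↥(F ⊔ .adjoin k (r '' S)) = finrank k F * 2 ^ S.card := by
  classical
  induction S using Finset.induction_on with
  | empty => rw [Finset.coe_empty, Set.image_empty, IntermediateField.adjoin_empty, sup_bot_eq,
      Finset.card_empty, pow_zero, mul_one]
  | insert i S hi ih =>
    have hri : r i ∉ F ⊔ .adjoin k (r '' S) := fun hmem ↦ by
      obtain ⟨T, hTS, hT⟩ := exists_mul_prod_mem_of_sq_mem hr hmem (hr i)
      rw [← Finset.prod_insert fun hiT ↦ hi (hTS hiT)] at hT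
      exact h (Finset.insert_nonempty i T) hT
    have hF : F ≤ F ⊔ .adjoin k (r '' S) := le_sup_left
    rw [sup_adjoin_image_insert, finrank_sup_adjoin_of_sq_mem (hF (hr i)) hri, ih,
      Finset.card_insert_of_notMem hi, pow_succ, mul_assoc]

end Multiquadratic

section Equivariant

variable {k Ω X : Type*} [Field k] [Field Ω] [Algebra k Ω] {F : IntermediateField k Ω} {r : X → Ω}

lemma algEquiv_apply_mem [Normal k F] (σ : Gal(Ω/k)) {y : Ω} (hy : y ∈ F) : σ y ∈ F := by
  have hσ : (σ.restrictNormal F ⟨y, hy⟩ : Ω) = σ y := σ.restrictNormal_commutes F ⟨y, hy⟩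
  exact hσ ▸ (σ.restrictNormal F ⟨y, hy⟩).2

lemma exists_algEquiv_apply_eq_neg [IsGalois k Ω] {y : Ω} (hy : y ∉ F) (hy2 : y ^ 2 ∈ F) :
    ∃ σ : Gal(Ω/k), (∀ x ∈ F, σ x = x) ∧ σ y = -y := by
  obtain ⟨σ, hσF, hσy⟩ : ∃ σ ∈ F.fixingSubgroup, σ y ≠ y := by
    rw [← InfiniteGalois.fixedField_fixingSubgroup F, IntermediateField.mem_fixedField_iff] at hy
    simpa using hy
  rw [IntermediateField.mem_fixingSubgroup_iff] at hσF
  have hsq : σ y ^ 2 = y ^ 2 := by rw [← map_pow, hσF _ hy2]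
  exact ⟨σ, hσF, (sq_eq_sq_iff_eq_or_eq_neg.mp hsq).resolve_left hσy⟩

lemma isPGroup_range_toPermHom [IsGalois k Ω] [Normal k F] [FiniteDimensional k F] {p m : ℕ}
    (hF : finrank k F = p ^ m) (A : SubMulAction Gal(Ω/k) Ω) (hA : ∀ x ∈ A, x ∈ F) :
    IsPGroup p (MulAction.toPermHom Gal(Ω/k) A).range := by
  have : IsGalois k F := { to_isSeparable := Algebra.isSeparable_tower_bot_of_isSeparable k F Ω }
  rintro ⟨_, σ, rfl⟩
  have hpow : AlgEquiv.restrictNormalHom F (σ ^ p ^ m) = 1 := by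
    rw [map_pow, ← hF, ← IsGalois.card_aut_eq_finrank, pow_card_eq_one']
  refine ⟨m, Subtype.ext ?_⟩
  rw [SubgroupClass.coe_pow, ← map_pow]
  refine Equiv.ext fun x ↦ Subtype.ext ?_
  calc (σ ^ p ^ m) x = (AlgEquiv.restrictNormalHom F (σ ^ p ^ m) ⟨x, hA x x.2⟩ : F) :=
        ((σ ^ p ^ m).restrictNormal_commutes F ⟨x, hA x x.2⟩).symm
    _ = x := by rw [hpow, AlgEquiv.one_apply]

lemma prod_symmDiff_mem [DecidableEq X] (hr : ∀ x, r x ^ 2 ∈ F) (hr0 : ∀ x, r x ≠ 0)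
    {S T : Finset X} (h : (∏ x ∈ S, r x) * ∏ x ∈ T, r x ∈ F) : ∏ x ∈ S ∆ T, r x ∈ F := by
  have hinter : ∏ x ∈ S ∩ T, r x ^ 2 ∈ F := prod_mem fun x _ ↦ hr x
  have hinter0 : ∏ x ∈ S ∩ T, r x ^ 2 ≠ 0 :=
    Finset.prod_ne_zero_iff.mpr fun x _ ↦ pow_ne_zero 2 (hr0 x)
  have hprod : (∏ x ∈ S ∆ T, r x) * ∏ x ∈ S ∩ T, r x ^ 2 = (∏ x ∈ S, r x) * ∏ x ∈ T, r x := by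
    rw [symmDiff_def, Finset.sup_eq_union, Finset.prod_union disjoint_sdiff_sdiff,
      Finset.prod_pow, ← Finset.prod_inter_mul_prod_sdiff S T,
      ← Finset.prod_inter_mul_prod_sdiff T S, Finset.inter_comm T S]
    ring
  rw [eq_div_of_mul_eq hinter0 hprod]
  exact div_mem h hinter

variable [MulAction Gal(Ω/k) X]

lemma prod_smul_sq [DecidableEq X] (hrσ : ∀ (σ : Gal(Ω/k)) x, r (σ • x) ^ 2 = σ (r x) ^ 2)
    (σ : Gal(Ω/k)) (S : Finset X) : (∏ x ∈ σ • S, r x) ^ 2 = σ (∏ x ∈ S, r x) ^ 2 := by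
  rw [Finset.smul_finset_def, Finset.prod_image (MulAction.injective σ).injOn, map_prod,
    ← Finset.prod_pow, ← Finset.prod_pow]
  exact Finset.prod_congr rfl fun x _ ↦ hrσ σ x

variable [Normal k F] [Fintype X] [MulAction.IsPretransitive Gal(Ω/k) X]

theorem sqrtIndependent_of_prod_univ_notMem
    (hG : IsPGroup 2 (MulAction.toPermHom Gal(Ω/k) X).range) (hr : ∀ x, r x ^ 2 ∈ F)
    (hrσ : ∀ (σ : Gal(Ω/k)) x, r (σ • x) ^ 2 = σ (r x) ^ 2) (huniv : ∏ x, r x ∉ F) :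
    SqrtIndependent F r := by
  classical
  intro S hne hS
  have hr0 : ∀ x, r x ≠ 0 := fun x hx ↦
    huniv (Finset.prod_eq_zero (Finset.mem_univ x) hx ▸ zero_mem F)
  let relations : SubMulAction (MulAction.toPermHom Gal(Ω/k) X).range (Finset X) :=
    { carrier := {S | ∏ x ∈ S, r x ∈ F}
      smul_mem' := by
        rintro ⟨_, σ, rfl⟩ S hS
        exact mem_of_sq_eq_sq (prod_smul_sq hrσ σ S) (algEquiv_apply_mem σ hS) }
  have : MulAction.IsPretransitive (MulAction.toPermHom Gal(Ω/k) X).range X :=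
    ⟨fun x y ↦ (MulAction.exists_smul_eq Gal(Ω/k) x y).imp' (fun σ ↦ ⟨_, σ, rfl⟩) fun _ h ↦ h⟩
  exact huniv (univ_mem_of_isPGroup hG relations
    (fun S hS T hT ↦ prod_symmDiff_mem hr hr0 (mul_mem hS hT)) hS hne)

theorem SqrtIndependent.mem_or_mul_prod_univ_mem [NeZero (2 : Ω)] (h : SqrtIndependent F r)
    (hr : ∀ x, r x ^ 2 ∈ F) (hrσ : ∀ (σ : Gal(Ω/k)) x, r (σ • x) ^ 2 = σ (r x) ^ 2) {y : Ω}
    (hy : y ∈ F ⊔ .adjoin k (Set.range r)) (hy2 : y ^ 2 ∈ (⊥ : IntermediateField k Ω)) :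
    y ∈ F ∨ y * ∏ x, r x ∈ F := by
  classical
  obtain rfl | hy0 := eq_or_ne y 0
  · exact .inl (zero_mem F)
  rw [← Set.image_univ, ← Finset.coe_univ] at hy
  have hy2F : y ^ 2 ∈ F := bot_le (a := F) hy2
  obtain ⟨T, -, hT⟩ := exists_mul_prod_mem_of_sq_mem hr hy hy2F
  obtain rfl | hne := T.eq_empty_or_nonempty
  · exact .inl (by simpa using hT)
  have hfixed : ∀ σ : Gal(Ω/k), σ • T = T := fun σ ↦ by
    have hσT : y * ∏ x ∈ σ • T, r x ∈ F := by
      refine mem_of_sq_eq_sq ?_ (algEquiv_apply_mem σ hT)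
      obtain ⟨a, ha⟩ := IntermediateField.mem_bot.mp hy2
      rw [map_mul, mul_pow, mul_pow, prod_smul_sq hrσ, ← map_pow σ y, ← ha, σ.commutes]
    have hmul : (∏ x ∈ σ • T, r x) * ∏ x ∈ T, r x ∈ F := by
      have hquot := div_mem (mul_mem hσT hT) hy2F
      rwa [mul_mul_mul_comm, ← sq, mul_div_cancel_left₀ _ (pow_ne_zero 2 hy0)] at hquot
    have hr0 : ∀ x, r x ≠ 0 := fun x hx ↦ h.notMem x (hx ▸ zero_mem F)
    by_contra hσ
    exact h (Finset.symmDiff_nonempty.mpr hσ) (prod_symmDiff_mem hr hr0 hmul)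
  rw [← eq_univ_of_forall_smul_eq hne hfixed]
  exact .inr hT

end Equivariant

section QuadMap

/-- The polynomial map `φ(x) = x² + x`. -/
def quadMap {R : Type*} [CommRing R] (x : R) : R := x ^ 2 + x

variable {R S : Type*} [CommRing R] [CommRing S]

lemma map_iterate_quadMap {F : Type*} [FunLike F R S] [RingHomClass F R S] (f : F) (n : ℕ) (x : R) :
    f (quadMap^[n] x) = quadMap^[n] (f x) :=
  (show Function.Semiconj f quadMap quadMap from fun y ↦ by
    rw [quadMap, quadMap, map_add, map_pow]).iterate_right n x

lemma two_mul_add_one_sq (x : R) : (2 * x + 1) ^ 2 = 1 + 4 * quadMap x := by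
  rw [quadMap]
  ring

lemma quadMap_eq_quadMap_iff [NoZeroDivisors R] {x y : R} :
    quadMap x = quadMap y ↔ x = y ∨ x = -1 - y := by
  have hfactor : quadMap x - quadMap y = (x - y) * (x - (-1 - y)) := by
    rw [quadMap, quadMap]
    ring
  rw [← sub_eq_zero, hfactor, mul_eq_zero, sub_eq_zero, sub_eq_zero]

/-- The integers `4 ^ 2 ^ n * φⁿ(-1/4)`: the forward orbit of the critical value `-1/4` of `φ`,
with denominators cleared. -/
def scaledOrbit : ℕ → ℤ
  | 0 => -1
  | n + 1 => scaledOrbit n * (scaledOrbit n + 4 ^ 2 ^ n)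

/-- The product `Δₙ` of `1 + 4 * x` over the solutions `x` of `φⁿ(x) = -1`, counted with
multiplicity. It equals `(-4) ^ 2 ^ n * (φⁿ(-1/4) + 1)`. -/
def fiberDisc (n : ℕ) : ℤ := (-1) ^ 2 ^ n * (scaledOrbit n + 4 ^ 2 ^ n)

lemma intCast_scaledOrbit {c : R} (hc : 4 * c = -1) (n : ℕ) :
    (scaledOrbit n : R) = 4 ^ 2 ^ n * quadMap^[n] c := by
  induction n with
  | zero => simp [scaledOrbit, hc]
  | succ n ih =>
    rw [scaledOrbit, Function.iterate_succ_apply', quadMap, pow_succ 2 n, pow_mul]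
    push_cast
    rw [ih]
    ring

end QuadMap

section Fiber

variable (k Ω : Type*) [Field k] [Field Ω] [Algebra k Ω]

/-- The solutions of `φⁿ(x) = -1` in `Ω`, as a Galois-stable set. -/
def fiber (n : ℕ) : SubMulAction Gal(Ω/k) Ω where
  carrier := {x | quadMap^[n] x = -1}
  smul_mem' σ x hx := by
    rw [Set.mem_ofPred_eq, AlgEquiv.smul_def, ← map_iterate_quadMap σ, hx, map_neg, map_one]

/-- The extension of `k` generated by the solutions of `φⁿ(x) = -1`. -/
def levelField (n : ℕ) : IntermediateField k Ω := .adjoin k (fiber k Ω n)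

instance unique_fiber_zero : Unique (fiber k Ω 0) where
  default := ⟨-1, rfl⟩
  uniq x := Subtype.ext x.2

variable {k Ω} {n : ℕ} {x : Ω}

lemma mem_fiber : x ∈ fiber k Ω n ↔ quadMap^[n] x = -1 := Iff.rfl

lemma mem_fiber_succ : x ∈ fiber k Ω (n + 1) ↔ quadMap x ∈ fiber k Ω n := Iff.rfl

lemma mem_levelField_of_mem_fiber (hx : x ∈ fiber k Ω n) : x ∈ levelField k Ω n :=
  IntermediateField.subset_adjoin k _ hx

variable (k Ω) in
lemma levelField_zero : levelField k Ω 0 = ⊥ := by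
  rw [levelField, IntermediateField.adjoin_eq_bot_iff]
  rintro _ rfl
  exact neg_mem (one_mem _)

instance normal_levelField [Normal k Ω] : Normal k (levelField k Ω n) := by
  rw [IntermediateField.normal_iff_forall_map_le']
  intro σ
  rw [levelField, IntermediateField.adjoin_map]
  refine IntermediateField.adjoin.mono _ _ _ ?_
  rintro _ ⟨x, hx, rfl⟩
  exact (fiber k Ω n).smul_mem σ hx

end Fiber

section QuadRoot

lemma four_ne_zero_of_neZero_two {R : Type*} [Semiring R] [NoZeroDivisors R] [NeZero (2 : R)] :
    (4 : R) ≠ 0 := by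
  have h : (4 : R) = 2 ^ 2 := by norm_num
  exact h ▸ pow_ne_zero 2 (NeZero.ne (2 : R))

variable {Ω : Type*} [Field Ω] [NeZero (2 : Ω)] [IsSepClosed Ω] {x : Ω}

/-- A chosen square root of `1 + 4 * x`, the discriminant of `φ(Y) - x`. -/
noncomputable def sqrtDisc (x : Ω) : Ω :=
  have : NeZero ((2 : ℕ) : Ω) := ‹NeZero (2 : Ω)›
  (IsSepClosed.exists_pow_nat_eq (1 + 4 * x) 2).choose

lemma sqrtDisc_sq (x : Ω) : sqrtDisc x ^ 2 = 1 + 4 * x :=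
  have : NeZero ((2 : ℕ) : Ω) := ‹NeZero (2 : Ω)›
  (IsSepClosed.exists_pow_nat_eq (1 + 4 * x) 2).choose_spec

/-- For a sign `ε`, the root `(ε √(1 + 4 * x) - 1) / 2` of `φ(Y) = x`. -/
noncomputable def quadRoot (x : Ω) (ε : ℤˣ) : Ω := (ε * sqrtDisc x - 1) / 2

lemma two_mul_quadRoot_add_one (x : Ω) (ε : ℤˣ) : 2 * quadRoot x ε + 1 = ε * sqrtDisc x := by
  rw [quadRoot, mul_div_cancel₀ _ (NeZero.ne (2 : Ω)), sub_add_cancel]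

lemma quadMap_quadRoot (x : Ω) (ε : ℤˣ) : quadMap (quadRoot x ε) = x := by
  have hsq : ((ε : ℤ) : Ω) ^ 2 = 1 := by
    rw [← Int.cast_pow, ← Units.val_pow_eq_pow_val, Int.units_sq, Units.val_one, Int.cast_one]
  have h := two_mul_add_one_sq (quadRoot x ε)
  rw [two_mul_quadRoot_add_one, mul_pow, hsq, one_mul, sqrtDisc_sq] at h
  exact (mul_left_cancel₀ four_ne_zero_of_neZero_two (add_left_cancel h)).symm

lemma quadRoot_neg (x : Ω) (ε : ℤˣ) : quadRoot x (-ε) = -1 - quadRoot x ε := by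
  have hpos := two_mul_quadRoot_add_one x ε
  have hneg := two_mul_quadRoot_add_one x (-ε)
  push_cast at hneg
  exact mul_left_cancel₀ (NeZero.ne (2 : Ω)) (by linear_combination hpos + hneg)

lemma exists_quadRoot_quadMap_eq (y : Ω) : ∃ ε, quadRoot (quadMap y) ε = y := by
  obtain h | h := quadMap_eq_quadMap_iff.mp (quadMap_quadRoot (quadMap y) 1)
  · exact ⟨1, h⟩
  · exact ⟨-1, by rw [quadRoot_neg, h, sub_sub_cancel]⟩

lemma quadRoot_injective (hx : sqrtDisc x ≠ 0) : Function.Injective (quadRoot x) := by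
  intro ε ε' h
  have hmul := congrArg (2 * · + 1) h
  simp only [two_mul_quadRoot_add_one, mul_left_inj' hx] at hmul
  have hne : (1 : Ω) ≠ -1 := by
    rw [ne_eq, eq_neg_iff_add_eq_zero, one_add_one_eq_two]
    exact NeZero.ne 2
  obtain rfl | rfl := Int.units_eq_one_or ε <;> obtain rfl | rfl := Int.units_eq_one_or ε'
  · rfl
  · exact absurd (by simpa using hmul) hne
  · exact absurd (by simpa using hmul.symm) hne
  · rfl

lemma prod_sub_quadRoot (t x : Ω) : ∏ ε, (t - quadRoot x ε) = quadMap t - x := by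
  rw [UnitsInt.univ, Finset.prod_pair (by decide), quadRoot_neg]
  have hroot := quadMap_quadRoot x 1
  rw [quadMap] at hroot ⊢
  linear_combination -hroot

end QuadRoot

section Tower

variable {k Ω : Type*} [Field k] [Field Ω] [Algebra k Ω] [NeZero (2 : Ω)] [IsSepClosed Ω]
  {n : ℕ} {x y : Ω}

variable (k n) in
/-- The parametrisation of the solutions of `φⁿ⁺¹(y) = -1` by those of `φⁿ(x) = -1` and a sign. -/
noncomputable def fiberSucc (p : fiber k Ω n × ℤˣ) : fiber k Ω (n + 1) :=
  ⟨quadRoot p.1 p.2, mem_fiber_succ.mpr ((quadMap_quadRoot (p.1 : Ω) p.2).symm ▸ p.1.2)⟩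

lemma fiberSucc_surjective : Function.Surjective (fiberSucc (Ω := Ω) k n) := by
  rintro ⟨y, hy⟩
  obtain ⟨ε, hε⟩ := exists_quadRoot_quadMap_eq y
  exact ⟨(⟨quadMap y, mem_fiber_succ.mp hy⟩, ε), Subtype.ext hε⟩

lemma fiberSucc_injective (h : ∀ x : fiber k Ω n, sqrtDisc (x : Ω) ≠ 0) :
    Function.Injective (fiberSucc (Ω := Ω) k n) := by
  rintro ⟨x, ε⟩ ⟨x', ε'⟩ heq
  have hroot : quadRoot (x : Ω) ε = quadRoot (x' : Ω) ε' := congrArg Subtype.val heq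
  obtain rfl : x = x' := Subtype.ext <| by
    rw [← quadMap_quadRoot (x : Ω) ε, hroot, quadMap_quadRoot]
  rw [quadRoot_injective (h x) hroot]

instance finite_fiber : Finite (fiber k Ω n) := by
  induction n with
  | zero => infer_instance
  | succ n ih => exact .of_surjective _ fiberSucc_surjective

noncomputable instance fintype_fiber : Fintype (fiber k Ω n) := .ofFinite _

instance finiteDimensional_levelField [Algebra.IsAlgebraic k Ω] :
    FiniteDimensional k (levelField k Ω n) :=
  have : Finite (fiber k Ω n : Set Ω) := finite_fiber
  IntermediateField.finiteDimensional_adjoin fun x _ ↦ Algebra.IsIntegral.isIntegral x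

lemma sqrtDisc_sq_mem_levelField (x : fiber k Ω n) : sqrtDisc (x : Ω) ^ 2 ∈ levelField k Ω n := by
  rw [sqrtDisc_sq]
  exact add_mem (one_mem _) (mul_mem (ofNat_mem _ 4) (mem_levelField_of_mem_fiber x.2))

variable (k Ω n) in
lemma levelField_succ : levelField k Ω (n + 1) =
    levelField k Ω n ⊔ .adjoin k (Set.range fun x : fiber k Ω n ↦ sqrtDisc (x : Ω)) := by
  apply le_antisymm
  · rw [levelField, IntermediateField.adjoin_le_iff]
    intro y hy
    obtain ⟨⟨x, ε⟩, h⟩ := fiberSucc_surjective ⟨y, hy⟩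
    obtain rfl : quadRoot (x : Ω) ε = y := congrArg Subtype.val h
    have hr : sqrtDisc (x : Ω) ∈ levelField k Ω n ⊔
        .adjoin k (Set.range fun x : fiber k Ω n ↦ sqrtDisc (x : Ω)) :=
      le_sup_right (a := levelField k Ω n) (IntermediateField.subset_adjoin k _ ⟨x, rfl⟩)
    exact div_mem (sub_mem (mul_mem (intCast_mem _ _) hr) (one_mem _)) (ofNat_mem _ 2)
  · have hroot (x : fiber k Ω n) : quadRoot (x : Ω) 1 ∈ levelField k Ω (n + 1) :=
      mem_levelField_of_mem_fiber (fiberSucc k n (x, 1)).2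
    refine sup_le ?_ ?_ <;> rw [levelField, IntermediateField.adjoin_le_iff]
    · intro x hx
      rw [SetLike.mem_coe, ← quadMap_quadRoot x 1]
      exact add_mem (pow_mem (hroot ⟨x, hx⟩) 2) (hroot ⟨x, hx⟩)
    · rintro _ ⟨x, rfl⟩
      have h := two_mul_quadRoot_add_one (x : Ω) 1
      rw [Units.val_one, Int.cast_one, one_mul] at h
      simp only [← h]
      exact add_mem (mul_mem (ofNat_mem _ 2) (hroot x)) (one_mem _)

lemma levelField_le_succ (n : ℕ) : levelField k Ω n ≤ levelField k Ω (n + 1) :=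
  levelField_succ k Ω n ▸ le_sup_left

lemma mem_levelField_of_iterate_quadMap_eq_zero {n : ℕ} (hx : quadMap^[n + 1] x = 0) :
    x ∈ levelField k Ω n := by
  have hfactor : quadMap^[n] x * (quadMap^[n] x + 1) = 0 := by
    rw [← hx, Function.iterate_succ_apply', quadMap]
    ring
  obtain hzero | hneg := mul_eq_zero.mp hfactor
  · cases n with
    | zero =>
      obtain rfl : x = 0 := hzero
      exact zero_mem _
    | succ n => exact levelField_le_succ n (mem_levelField_of_iterate_quadMap_eq_zero hzero)
  · exact mem_levelField_of_mem_fiber (mem_fiber.mpr (eq_neg_of_add_eq_zero_left hneg))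

/-- The square roots adjoined to pass from `levelField k Ω n` to `levelField k Ω (n + 1)` are
independent. -/
def LevelIndependent (k Ω : Type*) [Field k] [Field Ω] [Algebra k Ω] [NeZero (2 : Ω)]
    [IsSepClosed Ω] (n : ℕ) : Prop :=
  SqrtIndependent (levelField k Ω n) fun x : fiber k Ω n ↦ sqrtDisc (x : Ω)

lemma LevelIndependent.fiberSucc_bijective (h : LevelIndependent k Ω n) :
    Function.Bijective (fiberSucc (Ω := Ω) k n) :=
  ⟨fiberSucc_injective fun x hx ↦ h.notMem x (hx ▸ zero_mem _), fiberSucc_surjective⟩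

lemma card_fiber (h : ∀ m < n, LevelIndependent k Ω m) : Fintype.card (fiber k Ω n) = 2 ^ n := by
  induction n with
  | zero => rw [Fintype.card_unique, pow_zero]
  | succ n ih =>
    rw [← Fintype.card_of_bijective (h n n.lt_succ_self).fiberSucc_bijective, Fintype.card_prod,
      ih fun m hm ↦ h m (hm.trans n.lt_succ_self), Fintype.card_units_int, pow_succ]

lemma prod_sub_fiber (h : ∀ m < n, LevelIndependent k Ω m) (t : Ω) :
    ∏ x : fiber k Ω n, (t - x) = quadMap^[n] t + 1 := by
  induction n generalizing t with
  | zero =>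
    rw [Fintype.prod_unique]
    exact sub_neg_eq_add t 1
  | succ n ih =>
    rw [← (h n n.lt_succ_self).fiberSucc_bijective.prod_comp, Fintype.prod_prod_type]
    simp only [fiberSucc, prod_sub_quadRoot]
    rw [ih (fun m hm ↦ h m (hm.trans n.lt_succ_self)), Function.iterate_succ_apply]

variable (k Ω n) in
/-- The product of the chosen square roots of `1 + 4 * x` over the distinct solutions of
`φⁿ(x) = -1`; it is a square root of `fiberDisc n` when `φⁿ + 1` has no multiple roots. -/
noncomputable def sqrtDiscProd : Ω := ∏ x : fiber k Ω n, sqrtDisc (x : Ω)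

lemma sqrtDiscProd_sq (h : ∀ m < n, LevelIndependent k Ω m) :
    sqrtDiscProd k Ω n ^ 2 = fiberDisc n := by
  have hc : (4 : Ω) * -4⁻¹ = -1 := by
    rw [mul_neg, mul_inv_cancel₀ four_ne_zero_of_neZero_two]
  have hfactor (x : Ω) : 1 + 4 * x = -4 * (-4⁻¹ - x) := by linear_combination hc
  calc sqrtDiscProd k Ω n ^ 2 = ∏ x : fiber k Ω n, (1 + 4 * (x : Ω)) := by
        simp only [sqrtDiscProd, ← Finset.prod_pow, sqrtDisc_sq]
    _ = (-4) ^ 2 ^ n * (quadMap^[n] (-4⁻¹) + 1) := by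
        simp only [hfactor, Finset.prod_mul_distrib, prod_sub_fiber h, Finset.prod_const,
          Finset.card_univ, card_fiber h]
    _ = fiberDisc n := by
        rw [fiberDisc, neg_pow (4 : Ω)]
        push_cast
        rw [intCast_scaledOrbit hc]
        ring

theorem finrank_levelField_of_levelIndependent (h : ∀ m < n, LevelIndependent k Ω m) :
    finrank k (levelField k Ω n) = 2 ^ (2 ^ n - 1) := by
  induction n with
  | zero => rw [levelField_zero, IntermediateField.finrank_bot, pow_zero, Nat.sub_self, pow_zero]
  | succ n ih =>
    have hn : ∀ m < n, LevelIndependent k Ω m := fun m hm ↦ h m (hm.trans n.lt_succ_self)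
    have hexp : 2 ^ n - 1 + 2 ^ n = 2 ^ (n + 1) - 1 := by
      have := Nat.one_le_two_pow (n := n)
      omega
    rw [levelField_succ, ← Set.image_univ, ← Finset.coe_univ,
      SqrtIndependent.finrank_sup_adjoin_image (h n n.lt_succ_self) sqrtDisc_sq_mem_levelField,
      ih hn, Finset.card_univ, card_fiber hn, ← pow_add, hexp]

lemma sqrtDisc_smul_sq (σ : Gal(Ω/k)) (x : fiber k Ω n) :
    sqrtDisc ((σ • x : fiber k Ω n) : Ω) ^ 2 = σ (sqrtDisc (x : Ω)) ^ 2 := by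
  rw [← map_pow, sqrtDisc_sq, sqrtDisc_sq, SubMulAction.val_smul, AlgEquiv.smul_def, map_add,
    map_mul, map_one, map_ofNat]

variable [IsGalois k Ω]

lemma LevelIndependent.exists_algEquiv_apply_eq (h : LevelIndependent k Ω n)
    (hy : y ∈ fiber k Ω (n + 1)) : ∃ τ : Gal(Ω/k), τ y = -1 - y := by
  let x : fiber k Ω n := ⟨quadMap y, mem_fiber_succ.mp hy⟩
  have hsq : (2 * y + 1) ^ 2 = sqrtDisc (x : Ω) ^ 2 := by rw [two_mul_add_one_sq, sqrtDisc_sq]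
  obtain ⟨τ, -, hτ⟩ := exists_algEquiv_apply_eq_neg
    (fun hmem ↦ h.notMem x (mem_of_sq_eq_sq hsq.symm hmem))
    (hsq ▸ sqrtDisc_sq_mem_levelField x)
  refine ⟨τ, mul_left_cancel₀ (NeZero.ne (2 : Ω)) ?_⟩
  rw [map_add, map_mul, map_one, map_ofNat] at hτ
  linear_combination hτ

theorem isPretransitive_fiber (h : ∀ m < n, LevelIndependent k Ω m) :
    MulAction.IsPretransitive Gal(Ω/k) (fiber k Ω n) := by
  induction n with
  | zero => exact ⟨fun x y ↦ ⟨1, Subsingleton.elim _ _⟩⟩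
  | succ n ih =>
    have hn := ih fun m hm ↦ h m (hm.trans n.lt_succ_self)
    refine ⟨fun y z ↦ ?_⟩
    obtain ⟨σ, hσ⟩ := MulAction.exists_smul_eq Gal(Ω/k)
      (⟨quadMap y, mem_fiber_succ.mp y.2⟩ : fiber k Ω n) ⟨quadMap z, mem_fiber_succ.mp z.2⟩
    have hquad : quadMap (σ y) = quadMap (z : Ω) :=
      (map_iterate_quadMap σ 1 (y : Ω)).symm.trans (congrArg Subtype.val hσ)
    obtain hyz | hyz := quadMap_eq_quadMap_iff.mp hquad
    · exact ⟨σ, Subtype.ext hyz⟩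
    · obtain ⟨τ, hτ⟩ := (h n n.lt_succ_self).exists_algEquiv_apply_eq z.2
      refine ⟨τ * σ, Subtype.ext ?_⟩
      change τ (σ y) = z
      rw [hyz, map_sub, map_neg, map_one, hτ, sub_sub_cancel]

theorem exists_mul_prod_sqrtDiscProd_mem_bot (h : ∀ m < n, LevelIndependent k Ω m)
    (hy : y ∈ levelField k Ω n) (hy2 : y ^ 2 ∈ (⊥ : IntermediateField k Ω)) :
    ∃ T ⊆ Finset.range n, y * ∏ j ∈ T, sqrtDiscProd k Ω j ∈ (⊥ : IntermediateField k Ω) := by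
  induction n generalizing y with
  | zero => exact ⟨∅, subset_rfl, by simpa [levelField_zero] using hy⟩
  | succ n ih =>
    have hn : ∀ m < n, LevelIndependent k Ω m := fun m hm ↦ h m (hm.trans n.lt_succ_self)
    have := isPretransitive_fiber hn
    have hsub : Finset.range n ⊆ Finset.range (n + 1) := Finset.range_subset_range.mpr n.le_succ
    rw [levelField_succ] at hy
    obtain hy | hys := SqrtIndependent.mem_or_mul_prod_univ_mem (h n n.lt_succ_self)
      sqrtDisc_sq_mem_levelField sqrtDisc_smul_sq hy hy2
    · obtain ⟨T, hTn, hT⟩ := ih hn hy hy2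
      exact ⟨T, hTn.trans hsub, hT⟩
    · have hys2 : (y * sqrtDiscProd k Ω n) ^ 2 ∈ (⊥ : IntermediateField k Ω) := by
        rw [mul_pow, sqrtDiscProd_sq hn]
        exact mul_mem hy2 (intCast_mem _ _)
      obtain ⟨T, hTn, hT⟩ := ih hn hys hys2
      refine ⟨insert n T, ?_, ?_⟩
      · exact Finset.insert_subset (Finset.self_mem_range_succ n) (hTn.trans hsub)
      · rwa [Finset.prod_insert fun hnT ↦ Finset.notMem_range_self (hTn hnT), ← mul_assoc]

lemma sqrtDiscProd_notMem_levelField (h : ∀ m < n, LevelIndependent k Ω m)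
    (hdisc : ∀ T ⊆ Finset.range n, ¬IsSquare ((fiberDisc n * ∏ j ∈ T, fiberDisc j : ℤ) : k)) :
    sqrtDiscProd k Ω n ∉ levelField k Ω n := by
  intro hmem
  obtain ⟨T, hTn, hT⟩ := exists_mul_prod_sqrtDiscProd_mem_bot h hmem
    (sqrtDiscProd_sq h ▸ intCast_mem _ _)
  obtain ⟨a, ha⟩ := IntermediateField.mem_bot.mp hT
  refine hdisc T hTn ⟨a, (algebraMap k Ω).injective ?_⟩
  have hsq : ∀ j ∈ T, sqrtDiscProd k Ω j ^ 2 = fiberDisc j := fun j hj ↦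
    sqrtDiscProd_sq fun m hm ↦ h m (hm.trans (Finset.mem_range.mp (hTn hj)))
  rw [map_intCast, ← sq, map_pow, ha, mul_pow, ← Finset.prod_pow, sqrtDiscProd_sq h,
    Finset.prod_congr rfl hsq, Int.cast_mul, Int.cast_prod]

theorem levelIndependent_of_not_isSquare (hdisc : ∀ n, ∀ T ⊆ Finset.range n,
    ¬IsSquare ((fiberDisc n * ∏ j ∈ T, fiberDisc j : ℤ) : k)) (n : ℕ) : LevelIndependent k Ω n := by
  induction n using Nat.strong_induction_on with
  | _ n ih =>
    have := isPretransitive_fiber ih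
    have hpGroup := isPGroup_range_toPermHom (finrank_levelField_of_levelIndependent ih)
      (fiber k Ω n) fun x hx ↦ mem_levelField_of_mem_fiber hx
    exact sqrtIndependent_of_prod_univ_notMem hpGroup sqrtDisc_sq_mem_levelField sqrtDisc_smul_sq
      (sqrtDiscProd_notMem_levelField ih (hdisc n))

theorem finrank_levelField_of_not_isSquare (hdisc : ∀ n, ∀ T ⊆ Finset.range n,
    ¬IsSquare ((fiberDisc n * ∏ j ∈ T, fiberDisc j : ℤ) : k)) (n : ℕ) :
    finrank k (levelField k Ω n) = 2 ^ (2 ^ n - 1) :=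
  finrank_levelField_of_levelIndependent fun m _ ↦ levelIndependent_of_not_isSquare hdisc m

end Tower

section Arithmetic

lemma odd_scaledOrbit (n : ℕ) : Odd (scaledOrbit n) := by
  have heven (n : ℕ) : Even ((4 : ℤ) ^ 2 ^ n) :=
    (show Even (4 : ℤ) by decide).pow_of_ne_zero (Nat.two_pow_pos n).ne'
  induction n with
  | zero => decide
  | succ n ih => exact ih.mul (ih.add_even (heven n))

lemma add_dvd_scaledOrbit {i j : ℕ} (hij : i < j) :
    scaledOrbit i + 4 ^ 2 ^ i ∣ scaledOrbit j := by
  induction j, hij using Nat.le_induction with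
  | base => exact dvd_mul_left _ _
  | succ j _ ih => exact ih.mul_right _

lemma isCoprime_scaledOrbit_four_pow (n m : ℕ) : IsCoprime (scaledOrbit n) (4 ^ m) := by
  have hodd : IsCoprime (scaledOrbit n) 2 := Int.isCoprime_two_right.mpr (odd_scaledOrbit n)
  exact (hodd.pow_right (n := 2)).pow_right

lemma isCoprime_fiberDisc {i j : ℕ} (hij : i < j) : IsCoprime (fiberDisc i) (fiberDisc j) := by
  have hcop : IsCoprime (scaledOrbit j) (scaledOrbit j + 4 ^ 2 ^ j) := by
    simpa using (isCoprime_scaledOrbit_four_pow j (2 ^ j)).mul_add_left_right 1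
  have hunit (n : ℕ) : IsUnit ((-1 : ℤ) ^ 2 ^ n) := isUnit_neg_one.pow _
  rw [fiberDisc, fiberDisc, isCoprime_mul_unit_left_left (hunit i),
    isCoprime_mul_unit_left_right (hunit j)]
  exact hcop.of_isCoprime_of_dvd_left (add_dvd_scaledOrbit hij)

lemma four_pow_two_pow_succ_zmod_five (n : ℕ) : (4 : ZMod 5) ^ 2 ^ (n + 1) = 1 := by
  rw [pow_succ', pow_mul, show (4 : ZMod 5) ^ 2 = 1 by decide, one_pow]

lemma scaledOrbit_succ_zmod_five (n : ℕ) :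
    (scaledOrbit (n + 1) : ZMod 5) = 1 ∨ (scaledOrbit (n + 1) : ZMod 5) = 2 := by
  induction n with
  | zero => right; decide
  | succ n ih =>
    rw [scaledOrbit]
    push_cast
    rw [four_pow_two_pow_succ_zmod_five]
    obtain h | h := ih <;> rw [h] <;> decide

lemma fiberDisc_zmod_five (n : ℕ) : (fiberDisc n : ZMod 5) = 2 ∨ (fiberDisc n : ZMod 5) = 3 := by
  cases n with
  | zero => left; decide
  | succ n =>
    have hsign : (-1 : ℤ) ^ 2 ^ (n + 1) = 1 :=
      (Nat.even_pow.mpr ⟨even_two, n.succ_ne_zero⟩).neg_one_pow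
    rw [fiberDisc, hsign, one_mul]
    push_cast
    rw [four_pow_two_pow_succ_zmod_five]
    obtain h | h := scaledOrbit_succ_zmod_five n <;> rw [h] <;> decide

lemma fiberDisc_ne_sq (n : ℕ) (a : ℤ) : fiberDisc n ≠ a ^ 2 ∧ fiberDisc n ≠ -a ^ 2 := by
  have hsquares : ∀ b : ZMod 5, b ^ 2 ≠ 2 ∧ b ^ 2 ≠ 3 ∧ -b ^ 2 ≠ 2 ∧ -b ^ 2 ≠ 3 := by decide
  have ha := hsquares a
  constructor <;> intro h
  all_goals
    have hmod := fiberDisc_zmod_five n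
    rw [h] at hmod
    push_cast at hmod
    tauto

theorem not_isSquare_fiberDisc_mul_prod {n : ℕ} {T : Finset ℕ} (hT : T ⊆ Finset.range n) :
    ¬IsSquare ((fiberDisc n * ∏ j ∈ T, fiberDisc j : ℤ) : ℚ) := by
  rw [Rat.isSquare_intCast_iff]
  rintro ⟨c, hc⟩
  have hcop : IsCoprime (fiberDisc n) (∏ j ∈ T, fiberDisc j) :=
    .prod_right fun j hj ↦ (isCoprime_fiberDisc (Finset.mem_range.mp (hT hj))).symm
  obtain ⟨a, ha | ha⟩ := Int.sq_of_gcd_eq_one (Int.isCoprime_iff_gcd_eq_one.mp hcop)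
    (hc.trans (sq c).symm)
  · exact (fiberDisc_ne_sq n a).1 ha
  · exact (fiberDisc_ne_sq n a).2 ha

end Arithmetic

section SplittingField

-- The rational numbers act on `AlgebraicClosure ℚ` through `DivisionRing.toRatAlgebra` in the
-- definition of `splitFld`, but Mathlib's instances are about `AlgebraicClosure.instAlgebra`.
instance isGalois_algebraicClosure_rat : IsGalois ℚ (AlgebraicClosure ℚ) := by
  have : Algebra.IsAlgebraic ℚ (AlgebraicClosure ℚ) := by
    rw [Subsingleton.elim (DivisionRing.toRatAlgebra : Algebra ℚ (AlgebraicClosure ℚ))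
      (AlgebraicClosure.instAlgebra ℚ)]
    exact AlgebraicClosure.isAlgebraic ℚ
  have : IsAlgClosure ℚ (AlgebraicClosure ℚ) := ⟨inferInstance, inferInstance⟩
  exact { to_normal := IsAlgClosure.normal ℚ (AlgebraicClosure ℚ) }

lemma aeval_iterComp (p : ℚ[X]) (n : ℕ) {A : Type*} [CommRing A] [Algebra ℚ A] (x : A) :
    aeval x (iterComp p n) = (fun y ↦ aeval y p)^[n] x := by
  induction n with
  | zero => rw [iterComp, aeval_X, Function.iterate_zero_apply]
  | succ n ih => rw [iterComp, aeval_comp, ih, Function.iterate_succ_apply']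

lemma natDegree_iterComp (p : ℚ[X]) (n : ℕ) : (iterComp p n).natDegree = p.natDegree ^ n := by
  induction n with
  | zero => rw [iterComp, natDegree_X, pow_zero]
  | succ n ih => rw [iterComp, natDegree_comp, ih, pow_succ']

lemma iterComp_ne_zero {p : ℚ[X]} (hp : p.natDegree ≠ 0) (n : ℕ) : iterComp p n ≠ 0 :=
  ne_zero_of_natDegree_gt (natDegree_iterComp p n ▸ Nat.pow_pos (Nat.pos_of_ne_zero hp))

theorem splitFld_iterComp_succ (m : ℕ) :
    splitFld (iterComp (X ^ 2 + X) (m + 1)) = levelField ℚ (AlgebraicClosure ℚ) m := by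
  have hroot (x : AlgebraicClosure ℚ) :
      x ∈ (iterComp (X ^ 2 + X) (m + 1)).rootSet _ ↔ quadMap^[m + 1] x = 0 := by
    have hdeg : (X ^ 2 + X : ℚ[X]).natDegree ≠ 0 := by
      rw [show (X ^ 2 + X : ℚ[X]).natDegree = 2 by compute_degree!]
      exact two_ne_zero
    have heval : (fun y : AlgebraicClosure ℚ ↦ aeval y (X ^ 2 + X : ℚ[X])) = quadMap :=
      funext fun y ↦ by rw [map_add, map_pow, aeval_X, quadMap]
    rw [mem_rootSet_of_ne (iterComp_ne_zero hdeg _), aeval_iterComp, heval]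
  refine le_antisymm (IntermediateField.adjoin_le_iff.mpr fun x hx ↦ ?_)
    (IntermediateField.adjoin.mono _ _ _ fun x hx ↦ ?_)
  · exact mem_levelField_of_iterate_quadMap_eq_zero ((hroot x).mp hx)
  · rw [hroot, Function.iterate_succ_apply', mem_fiber.mp hx, quadMap]
    norm_num

end SplittingField

end Arboreal

/-- with `φ(X) = X² + X`, for every `n ≥ 1` the splitting field `K_n` of
`φ^{∘n}` over `ℚ` satisfies `[K_n : ℚ] = 2^(2^(n−1) − 1)`, the maximal possible order,
equal to the order of the automorphism group of the complete binary tree of height `n−1`. -/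
theorem stmt_19 (n : ℕ) (hn : 1 ≤ n) :
    Module.finrank ℚ ↥(splitFld (iterComp (X ^ 2 + X) n)) = 2 ^ (2 ^ (n - 1) - 1) := by
  obtain ⟨m, rfl⟩ := Nat.exists_eq_add_of_le' hn
  rw [Arboreal.splitFld_iterComp_succ, Arboreal.finrank_levelField_of_not_isSquare
    fun n T hT ↦ Arboreal.not_isSquare_fiberDisc_mul_prod hT, Nat.add_sub_cancel]
end
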